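/- arXiv:1803.04174 — 7 statements merged into one kernel-verified Lean document; each statement's English description precedes it below -/
import Mathlib

section
/- Let p_1 < p_2 < ... < p_n be positive real numbers and let B be the n×n matrix with (i,j) entry (p_i + p_j)^(p_i + p_j). Then for every real number r > 0, the entrywise power B^{∘r}, i.e. the matrix with (i,j) entry (p_i + p_j)^{(p_i + p_j) r}, is positive semidefinite. (In other words, B is infinitely divisible.) -/
open Filter Topology in
/-- Entrywise limits of positive semidefinite matrices are positive semidefinite. -/
theorem aux_psd_tendsto {n : ℕ} (M : ℕ → Matrix (Fin n) (Fin n) ℝ) (L : Matrix (Fin n) (Fin n) ℝ)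
    (hM : ∀ k, (M k).PosSemidef) (h : ∀ i j, Tendsto (fun k => M k i j) atTop (𝓝 (L i j))) :
    L.PosSemidef := by
  refine Matrix.PosSemidef.of_dotProduct_mulVec_nonneg ?_ ?_
  · ext i j
    have h1 := h j i
    have h2 : ∀ k, M k j i = M k i j := fun k => by
      simpa using (hM k).isHermitian.apply i j
    simp only [h2] at h1
    simpa using tendsto_nhds_unique h1 (h i j)
  · intro x
    have h1 : Tendsto (fun k => star x ⬝ᵥ (M k).mulVec x) atTop (𝓝 (star x ⬝ᵥ L.mulVec x)) := by
      simp only [dotProduct, Matrix.mulVec]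
      exact tendsto_finsetSum _ fun i _ => Tendsto.const_mul _
        (tendsto_finsetSum _ fun j _ => Tendsto.mul_const _ (h i j))
    exact ge_of_tendsto' h1 fun k => (hM k).dotProduct_mulVec_nonneg x

theorem aux_psd_rank_one {n : ℕ} (g : Fin n → ℝ) :
    (Matrix.of fun i j => g i * g j : Matrix (Fin n) (Fin n) ℝ).PosSemidef := by
  exact Matrix.posSemidef_vecMulVec_self_star g

theorem aux_psd_hasSum {n : ℕ} (M : ℕ → Matrix (Fin n) (Fin n) ℝ) (L : Matrix (Fin n) (Fin n) ℝ)
    (hM : ∀ k, (M k).PosSemidef) (h : ∀ i j, HasSum (fun k => M k i j) (L i j)) :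
    L.PosSemidef := by
  refine aux_psd_tendsto (fun N => ∑ k ∈ Finset.range N, M k) L
    (fun N => Matrix.posSemidef_sum _ fun k _ => hM k) fun i j => ?_
  simpa [Matrix.sum_apply] using (h i j).tendsto_sum_nat

theorem aux_psd_pow {n : ℕ} (A : Matrix (Fin n) (Fin n) ℝ) (hA : A.PosSemidef) (k : ℕ) :
    (Matrix.of fun i j => A i j ^ k : Matrix (Fin n) (Fin n) ℝ).PosSemidef := by
  induction k with
  | zero => simpa using aux_psd_rank_one (fun _ : Fin n => (1 : ℝ))
  | succ k ih =>
    have e : (Matrix.of fun i j => A i j ^ (k + 1) : Matrix (Fin n) (Fin n) ℝ) =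
        Matrix.hadamard (Matrix.of fun i j => A i j ^ k) A := by
      ext i j
      simp [pow_succ]
    rw [e]
    exact ih.hadamard hA

theorem aux_psd_exp {n : ℕ} (A : Matrix (Fin n) (Fin n) ℝ) (hA : A.PosSemidef) :
    (Matrix.of fun i j => Real.exp (A i j) : Matrix (Fin n) (Fin n) ℝ).PosSemidef := by
  refine aux_psd_hasSum
    (fun k => ((k.factorial : ℝ)⁻¹) • (Matrix.of fun i j => A i j ^ k)) _
    (fun k => (aux_psd_pow A hA k).smul (by positivity)) fun i j => ?_
  have := NormedSpace.exp_series_hasSum_exp' (𝕂 := ℝ) (A i j)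
  rw [← Real.exp_eq_exp_ℝ] at this
  simpa using this

theorem aux_series {w : ℝ} (hw : |w| < 1) :
    HasSum (fun n : ℕ => (1 / ((n + 1 : ℝ) * (n + 2))) * w ^ (n + 2))
      (w + (1 - w) * Real.log (1 - w)) := by
  have h := Real.hasSum_pow_div_log_of_abs_lt_one hw
  have h1 := (hasSum_nat_add_iff' 1).mpr h
  have h2 := (h.mul_left w).sub h1
  simp only [Finset.range_one, Finset.sum_singleton] at h2
  have e1 : (fun n : ℕ => (1 / ((n + 1 : ℝ) * (n + 2))) * w ^ (n + 2)) =
      fun b : ℕ => w * (w ^ (b + 1) / ((b : ℝ) + 1)) - w ^ (b + 1 + 1) / (((b + 1 : ℕ) : ℝ) + 1) := by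
    funext k
    have hk : ((k : ℝ) + 1) ≠ 0 := by positivity
    have hk2 : ((k : ℝ) + 2) ≠ 0 := by positivity
    have hk3 : (((k + 1 : ℕ) : ℝ) + 1) = (k : ℝ) + 2 := by push_cast; ring
    rw [hk3]
    field_simp
    ring
  have e2 : w + (1 - w) * Real.log (1 - w) =
      w * -Real.log (1 - w) - (-Real.log (1 - w) - w ^ (0 + 1) / (((0 : ℕ) : ℝ) + 1)) := by
    push_cast
    ring
  rw [e1, e2]
  exact h2

theorem aux_identity {p q l : ℝ} (hp : 0 < p) (hq : 0 < q) (hl : 0 < l) :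
    (p + q) * Real.log (p + q) =
      (l + p) * (l + q) / (2 * l) *
        ((l - p) / (l + p) * ((l - q) / (l + q)) +
          (1 - (l - p) / (l + p) * ((l - q) / (l + q))) *
            Real.log (1 - (l - p) / (l + p) * ((l - q) / (l + q))))
      + (-l / 4 + p / 2 + p * Real.log (l + p) + p * Real.log l - p * Real.log (2 * l))
      + (-l / 4 + q / 2 + q * Real.log (l + q) + q * Real.log l - q * Real.log (2 * l))
      + (p * Real.log (1 + q / l) + q * Real.log (1 + p / l) - p * q / (2 * l)) := by
  have e1 : 1 - (l - p) / (l + p) * ((l - q) / (l + q)) =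
      (2 * l) * (p + q) / ((l + p) * (l + q)) := by
    field_simp; ring
  have e2 : ∀ x : ℝ, 0 < x → Real.log (1 + x / l) = Real.log (l + x) - Real.log l := by
    intro x hx
    rw [← Real.log_div (by positivity) (by positivity)]
    congr 1; field_simp
  rw [e1, e2 p hp, e2 q hq, Real.log_div (by positivity) (by positivity),
    Real.log_mul (x := 2 * l) (by positivity) (by positivity),
    Real.log_mul (x := l + p) (by positivity) (by positivity)]
  field_simp
  ring

theorem aux_core {n : ℕ} (p : Fin n → ℝ) (hpos : ∀ i, 0 < p i) {l : ℝ} (hl : 0 < l) :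
    (Matrix.of fun i j => (l + p i) * (l + p j) / (2 * l) *
        ((l - p i) / (l + p i) * ((l - p j) / (l + p j)) +
          (1 - (l - p i) / (l + p i) * ((l - p j) / (l + p j))) *
            Real.log (1 - (l - p i) / (l + p i) * ((l - p j) / (l + p j))))
      : Matrix (Fin n) (Fin n) ℝ).PosSemidef := by
  have ha : ∀ i, |(l - p i) / (l + p i)| < 1 := by
    intro i
    have := hpos i
    rw [abs_div, abs_of_pos (by linarith : 0 < l + p i), div_lt_one (by linarith), abs_lt]
    constructor <;> linarith
  refine aux_psd_hasSum
    (fun k => (1 / (2 * l) * (1 / ((k + 1 : ℝ) * (k + 2)))) •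
      Matrix.of fun i j => ((l + p i) * ((l - p i) / (l + p i)) ^ (k + 2)) *
        ((l + p j) * ((l - p j) / (l + p j)) ^ (k + 2))) _
    (fun k => (aux_psd_rank_one
      (fun i => (l + p i) * ((l - p i) / (l + p i)) ^ (k + 2))).smul (by positivity))
    fun i j => ?_
  have hw : |(l - p i) / (l + p i) * ((l - p j) / (l + p j))| < 1 := by
    rw [abs_mul]
    exact mul_lt_one_of_nonneg_of_lt_one_left (abs_nonneg _) (ha i) (ha j).le
  have := (aux_series hw).mul_left ((l + p i) * (l + p j) / (2 * l))
  simp only [Matrix.of_apply]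
  refine Eq.subst (motive := fun f => HasSum f _) (funext fun k => ?_) this
  simp only [Matrix.smul_apply, Matrix.of_apply, smul_eq_mul, mul_pow]
  ring

open Filter Topology in
theorem aux_err (p q : ℝ) :
    Tendsto (fun k : ℕ => p * Real.log (1 + q / ((k : ℝ) + 1)) + q * Real.log (1 + p / ((k : ℝ) + 1))
      - p * q / (2 * ((k : ℝ) + 1))) atTop (𝓝 0) := by
  have h0 : ∀ x : ℝ, Tendsto (fun k : ℕ => x / ((k : ℝ) + 1)) atTop (𝓝 0) := by
    intro x
    simpa [div_eq_mul_inv] using (tendsto_one_div_add_atTop_nhds_zero_nat (𝕜 := ℝ)).const_mul x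
  have h1 : ∀ x : ℝ, Tendsto (fun k : ℕ => Real.log (1 + x / ((k : ℝ) + 1))) atTop (𝓝 0) := by
    intro x
    have := ((h0 x).const_add 1).log (by norm_num)
    simpa using this
  have h2 := (((h1 q).const_mul p).add ((h1 p).const_mul q)).sub (h0 (p * q / 2))
  simp only [mul_zero, add_zero, sub_zero] at h2
  refine h2.congr fun k => ?_
  rw [div_div]

/-- Infinite divisibility of the matrix `[(pᵢ + pⱼ)^(pᵢ + pⱼ)]`: every positive
entrywise power is positive semidefinite. -/
theorem stmt_0 (n : ℕ) (p : Fin n → ℝ) (hpos : ∀ i, 0 < p i) (hmono : StrictMono p)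
    (r : ℝ) (hr : 0 < r) :
    Matrix.PosSemidef (Matrix.of fun i j : Fin n =>
      (p i + p j) ^ ((p i + p j) * r)) := by
  have hl : ∀ k : ℕ, (0 : ℝ) < (k : ℝ) + 1 := fun k => by positivity
  refine aux_psd_tendsto (fun k => Matrix.of fun i j =>
    Real.exp (r * ((p i + p j) * Real.log (p i + p j) -
      (p i * Real.log (1 + p j / ((k : ℝ) + 1)) + p j * Real.log (1 + p i / ((k : ℝ) + 1))
      - p i * p j / (2 * ((k : ℝ) + 1)))))) _ (fun k => ?_) fun i j => ?_
  · have h1 := aux_psd_exp _ ((aux_core p hpos (hl k)).smul hr.le)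
    have h2 := aux_psd_rank_one (fun i => Real.exp (r * (-((k : ℝ) + 1) / 4 + p i / 2
      + p i * Real.log (((k : ℝ) + 1) + p i) + p i * Real.log ((k : ℝ) + 1)
      - p i * Real.log (2 * ((k : ℝ) + 1)))))
    refine (Eq.subst (motive := Matrix.PosSemidef) ?_ (h1.hadamard h2))
    ext i j
    simp only [Matrix.hadamard_apply, Matrix.smul_apply, Matrix.of_apply, smul_eq_mul]
    rw [mul_comm (Real.exp _) (Real.exp _ * Real.exp _), ← Real.exp_add, ← Real.exp_add,
      aux_identity (hpos i) (hpos j) (hl k)]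
    congr 1
    ring
  · have h := (((aux_err (p i) (p j)).const_sub
      ((p i + p j) * Real.log (p i + p j))).const_mul r).rexp
    have hp : 0 < p i + p j := add_pos (hpos i) (hpos j)
    simp only [Matrix.of_apply]
    rw [Real.rpow_def_of_pos hp]
    convert h using 2
    ring_nf
end

section
/- Let p_1 < p_2 < ... < p_n be positive real numbers and let B be the n×n matrix with (i,j) entry (p_i + p_j)^(p_i + p_j). Then B is nonsingular, i.e. det B ≠ 0. -/
open Filter Topology

lemma aux_nonneg {f f' : ℝ → ℝ} {a : ℝ} (hd : ∀ x, a < x → HasDerivAt f (f' x) x)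
    (hn : ∀ x, a < x → f' x ≤ 0) (hl : Tendsto f atTop (𝓝 0)) (x : ℝ) (hx : a < x) :
    0 ≤ f x := by
  have hanti : AntitoneOn f (Set.Ioi a) := by
    apply antitoneOn_of_deriv_nonpos (convex_Ioi a)
    · intro y hy
      exact (hd y hy).continuousAt.continuousWithinAt
    · rw [interior_Ioi]
      intro y hy
      exact (hd y hy).differentiableAt.differentiableWithinAt
    · rw [interior_Ioi]
      intro y hy
      rw [(hd y hy).deriv]
      exact hn y hy
  refine le_of_tendsto hl ?_
  filter_upwards [eventually_ge_atTop x] with y hy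
  exact hanti hx (lt_of_lt_of_le hx hy) hy

lemma aux_cauchy {ι : Type*} [Fintype ι] (c q : ι → ℝ) (hq : ∀ i, 0 < q i) :
    0 ≤ ∑ i, ∑ j, c i * c j * (1 / (q i + q j)) := by
  have h := aux_nonneg (a := -1)
    (f := fun t => ∑ i, ∑ j, c i * c j * (Real.exp (-(q i + q j) * t) / (q i + q j)))
    (f' := fun t => ∑ i, ∑ j, c i * c j * (Real.exp (-(q i + q j) * t) * (-(q i + q j)) / (q i + q j)))
    ?_ ?_ ?_ 0 (by norm_num)
  · simpa using h
  · intro t _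
    refine HasDerivAt.fun_sum fun i _ => HasDerivAt.fun_sum fun j _ => ?_
    refine HasDerivAt.const_mul _ (HasDerivAt.div_const ?_ _)
    have h1 : HasDerivAt (fun t => -(q i + q j) * t) (-(q i + q j)) t := by
      simpa using (hasDerivAt_id t).const_mul (-(q i + q j))
    exact h1.exp
  · intro t _
    have : ∑ i, ∑ j, c i * c j * (Real.exp (-(q i + q j) * t) * (-(q i + q j)) / (q i + q j))
        = - ((∑ i, c i * Real.exp (-(q i) * t)) * (∑ j, c j * Real.exp (-(q j) * t))) := by
      rw [Finset.sum_mul_sum, ← Finset.sum_neg_distrib]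
      refine Finset.sum_congr rfl fun i _ => ?_
      rw [← Finset.sum_neg_distrib]
      refine Finset.sum_congr rfl fun j _ => ?_
      have hne : q i + q j ≠ 0 := (add_pos (hq i) (hq j)).ne'
      have : Real.exp (-(q i + q j) * t) = Real.exp (-(q i) * t) * Real.exp (-(q j) * t) := by
        rw [← Real.exp_add]; ring_nf
      rw [this]
      field_simp
    change _ ≤ (0:ℝ)
    rw [this]
    nlinarith [mul_self_nonneg (∑ i, c i * Real.exp (-(q i) * t))]
  · have : (0:ℝ) = ∑ i, ∑ j, c i * c j * (0 / (q i + q j)) := by simp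
    rw [this]
    refine tendsto_finsetSum _ fun i _ => tendsto_finsetSum _ fun j _ => ?_
    refine Tendsto.const_mul _ (Tendsto.div_const ?_ _)
    refine Real.tendsto_exp_atBot.comp ?_
    exact tendsto_id.const_mul_atTop_of_neg (by linarith [hq i, hq j])

lemma aux_sum0 {ι : Type*} [Fintype ι] (c : ι → ℝ) (hc : ∑ i, c i = 0) :
    ∑ i, ∑ j, c i * c j = 0 := by
  rw [← Finset.sum_mul_sum, hc, zero_mul]

lemma aux_sum1 {ι : Type*} [Fintype ι] (c p : ι → ℝ) (hc : ∑ i, c i = 0) :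
    ∑ i, ∑ j, c i * c j * (p i + p j) = 0 := by
  have : ∑ i, ∑ j, c i * c j * (p i + p j) =
      (∑ i, c i * p i) * (∑ j, c j) + (∑ i, c i) * (∑ j, c j * p j) := by
    rw [Finset.sum_mul_sum, Finset.sum_mul_sum, ← Finset.sum_add_distrib]
    refine Finset.sum_congr rfl fun i _ => ?_
    rw [← Finset.sum_add_distrib]
    refine Finset.sum_congr rfl fun j _ => ?_
    ring
  rw [this, hc]; ring

lemma aux_logsum {ι : Type*} [Fintype ι] (c p : ι → ℝ) (hp : ∀ i, 0 ≤ p i)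
    (hc : ∑ i, c i = 0) (u : ℝ) (hu : 0 < u) :
    ∑ i, ∑ j, c i * c j * (Real.log (p i + p j + u) + 1) ≤ 0 := by
  have h := aux_nonneg (a := 0)
    (f := fun u => - ∑ i, ∑ j, c i * c j * (Real.log (p i + p j + u) + 1))
    (f' := fun u => - ∑ i, ∑ j, c i * c j * (1 / (p i + p j + u)))
    ?_ ?_ ?_ u hu
  · simpa using h
  · intro t ht
    refine HasDerivAt.neg ?_
    refine HasDerivAt.fun_sum fun i _ => HasDerivAt.fun_sum fun j _ => ?_
    refine HasDerivAt.const_mul _ (HasDerivAt.add_const _ ?_)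
    exact ((hasDerivAt_id t).const_add (p i + p j)).log
      (by have := hp i; have := hp j; simp only [id]; positivity)
  · intro t ht
    have := aux_cauchy c (fun i => p i + t / 2) (fun i => by have := hp i; positivity)
    simp only [Left.neg_nonpos_iff]
    have e : ∀ i j, p i + t / 2 + (p j + t / 2) = p i + p j + t := fun i j => by ring
    simpa only [e] using this
  · have : (0:ℝ) = - ∑ i, ∑ j, c i * c j * (0 + 1) := by simp [aux_sum0 c hc]
    rw [this]
    have key : (fun u => - ∑ i, ∑ j, c i * c j * (Real.log (p i + p j + u) + 1)) =
        fun u => - ∑ i, ∑ j, c i * c j * ((Real.log (u + (p i + p j)) - Real.log u) + 1) := by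
      funext u
      have e : ∑ i, ∑ j, c i * c j * ((Real.log (u + (p i + p j)) - Real.log u) + 1) =
        ∑ i, ∑ j, c i * c j * (Real.log (p i + p j + u) + 1)
          - (∑ i, ∑ j, c i * c j) * Real.log u := by
        simp only [Finset.sum_mul, ← Finset.sum_sub_distrib]
        refine Finset.sum_congr rfl fun i _ => Finset.sum_congr rfl fun j _ => ?_
        rw [add_comm u]; ring
      rw [e, aux_sum0 c hc]; simp
    rw [key]
    refine Tendsto.neg ?_
    refine tendsto_finsetSum _ fun i _ => tendsto_finsetSum _ fun j _ => ?_
    exact ((Real.tendsto_log_comp_add_sub_log _).add_const 1).const_mul _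

lemma aux_lim (a : ℝ) (ha : 0 ≤ a) :
    Tendsto (fun u => (a + u) * Real.log (a + u) - u * Real.log u - a * Real.log u)
      atTop (𝓝 a) := by
  have h1 := Real.tendsto_mul_log_one_add_div_atTop a
  have h2 := (Real.tendsto_log_comp_add_sub_log a).const_mul a
  have h3 := h1.add h2
  rw [mul_zero, add_zero] at h3
  refine h3.congr' ?_
  filter_upwards [eventually_gt_atTop 0] with u hu
  have : 1 + a / u = (u + a) / u := by field_simp
  rw [this, Real.log_div (by positivity) hu.ne', add_comm u]
  ring

lemma aux_xlogx {ι : Type*} [Fintype ι] (c p : ι → ℝ) (hp : ∀ i, 0 ≤ p i)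
    (hc : ∑ i, c i = 0) (u : ℝ) (hu : 0 < u) :
    0 ≤ ∑ i, ∑ j, c i * c j * ((p i + p j + u) * Real.log (p i + p j + u)) := by
  refine aux_nonneg (a := 0)
    (f := fun u => ∑ i, ∑ j, c i * c j * ((p i + p j + u) * Real.log (p i + p j + u)))
    (f' := fun u => ∑ i, ∑ j, c i * c j * (Real.log (p i + p j + u) + 1))
    ?_ ?_ ?_ u hu
  · intro t ht
    refine HasDerivAt.fun_sum fun i _ => HasDerivAt.fun_sum fun j _ => ?_
    refine HasDerivAt.const_mul _ ?_
    have h0 : p i + p j + t ≠ 0 := by have := hp i; have := hp j; positivity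
    exact (Real.hasDerivAt_mul_log h0).comp_const_add (p i + p j) t
  · intro t ht
    exact aux_logsum c p hp hc t ht
  · have key : (fun u => ∑ i, ∑ j, c i * c j * ((p i + p j + u) * Real.log (p i + p j + u))) =
        fun u => ∑ i, ∑ j, c i * c j * ((p i + p j + u) * Real.log (p i + p j + u)
          - u * Real.log u - (p i + p j) * Real.log u) := by
      funext u
      have e : ∑ i, ∑ j, c i * c j * ((p i + p j + u) * Real.log (p i + p j + u)
          - u * Real.log u - (p i + p j) * Real.log u) =
        ∑ i, ∑ j, c i * c j * ((p i + p j + u) * Real.log (p i + p j + u))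
          - (∑ i, ∑ j, c i * c j) * (u * Real.log u)
          - (∑ i, ∑ j, c i * c j * (p i + p j)) * Real.log u := by
        simp only [Finset.sum_mul, ← Finset.sum_sub_distrib]
        refine Finset.sum_congr rfl fun i _ => Finset.sum_congr rfl fun j _ => ?_
        ring
      rw [e, aux_sum0 c hc, aux_sum1 c p hc]; simp
    rw [key, ← aux_sum1 c p hc]
    refine tendsto_finsetSum _ fun i _ => tendsto_finsetSum _ fun j _ => ?_
    exact (aux_lim _ (add_nonneg (hp i) (hp j))).const_mul _

lemma aux_xlogx0 {ι : Type*} [Fintype ι] (c p : ι → ℝ) (hp : ∀ i, 0 ≤ p i)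
    (hc : ∑ i, c i = 0) :
    0 ≤ ∑ i, ∑ j, c i * c j * ((p i + p j) * Real.log (p i + p j)) := by
  have hcont : Continuous (fun u : ℝ =>
      ∑ i, ∑ j, c i * c j * ((p i + p j + u) * Real.log (p i + p j + u))) := by
    refine continuous_finsetSum _ fun i _ => continuous_finsetSum _ fun j _ => ?_
    exact continuous_const.mul (Real.continuous_mul_log.comp (continuous_const.add continuous_id))
  have h1 := (hcont.tendsto 0).mono_left (nhdsWithin_le_nhds (s := Set.Ioi 0))
  simp only [add_zero] at h1
  refine ge_of_tendsto h1 ?_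
  filter_upwards [self_mem_nhdsWithin] with u hu
  exact aux_xlogx c p hp hc u hu

/-- The kernel `(x+y) log (x+y) - x log x - y log y`. -/
noncomputable def auxG (x y : ℝ) : ℝ :=
  (x + y) * Real.log (x + y) - x * Real.log x - y * Real.log y

lemma auxG_psd {n : ℕ} (p : Fin n → ℝ) (hp : ∀ i, 0 < p i) :
    (Matrix.of fun i j : Fin n => auxG (p i) (p j)).PosSemidef := by
  refine Matrix.PosSemidef.of_dotProduct_mulVec_nonneg ?_ ?_
  · ext i j
    simp only [Matrix.conjTranspose_apply, Matrix.of_apply, auxG, star_trivial]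
    rw [add_comm (p j)]; ring
  · intro c
    have h := aux_xlogx0 (ι := Option (Fin n)) (fun o => o.elim (-∑ i, c i) c)
      (fun o => o.elim 0 p) (by rintro (_ | i); · simp
                                exact (hp i).le) (by simp [Fintype.sum_option])
    simp only [Fintype.sum_option, Option.elim] at h
    have e : star c ⬝ᵥ (Matrix.of fun i j : Fin n => auxG (p i) (p j)).mulVec c =
        ∑ i, ∑ j, c i * c j * ((p i + p j) * Real.log (p i + p j))
        - (∑ i, c i * (p i * Real.log (p i))) * (∑ j, c j)
        - (∑ i, c i) * (∑ j, c j * (p j * Real.log (p j))) := by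
      rw [Finset.sum_mul_sum, Finset.sum_mul_sum]
      simp only [dotProduct, Matrix.mulVec, ← Finset.sum_sub_distrib, Finset.mul_sum]
      refine Finset.sum_congr rfl fun i _ => Finset.sum_congr rfl fun j _ => ?_
      simp only [Matrix.of_apply, auxG, Pi.star_apply, star_trivial]
      ring
    rw [e]
    simp only [zero_add, add_zero, zero_mul, mul_zero] at h
    rw [Finset.sum_add_distrib] at h
    have e1 : ∑ x, -(∑ i, c i) * c x * (p x * Real.log (p x)) =
        - ((∑ i, c i) * (∑ j, c j * (p j * Real.log (p j)))) := by
      generalize (∑ i, c i) = S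
      rw [Finset.mul_sum, ← Finset.sum_neg_distrib]
      exact Finset.sum_congr rfl fun j _ => by ring
    have e2 : ∑ x, c x * -(∑ i, c i) * (p x * Real.log (p x)) =
        - ((∑ i, c i * (p i * Real.log (p i))) * (∑ j, c j)) := by
      generalize (∑ i, c i) = S
      rw [Finset.sum_mul, ← Finset.sum_neg_distrib]
      exact Finset.sum_congr rfl fun j _ => by ring
    rw [e1, e2] at h
    linarith

lemma auxG_lt {x y z : ℝ} (hx : 0 < x) (hy : 0 < y) (hyz : y < z) : auxG x y < auxG x z := by
  have hm : StrictMonoOn (auxG x) (Set.Ioi 0) := by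
    have hd : ∀ t, 0 < t → HasDerivAt (auxG x) (Real.log (x + t) + 1 - (Real.log t + 1)) t := by
      intro t ht
      have h1 := (Real.hasDerivAt_mul_log (x := x + t) (by positivity)).comp_const_add x t
      exact (h1.sub_const (x * Real.log x)).sub (Real.hasDerivAt_mul_log ht.ne')
    apply strictMonoOn_of_deriv_pos (convex_Ioi 0)
    · intro t ht
      exact (hd t ht).continuousAt.continuousWithinAt
    · rw [interior_Ioi]
      intro t ht
      rw [(hd t ht).deriv]
      have := Real.log_lt_log ht (show t < x + t by linarith)
      linarith
  exact hm hy (hy.trans hyz) hyz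

lemma aux_pow_psd {n : ℕ} (M : Matrix (Fin n) (Fin n) ℝ) (hM : M.PosSemidef) (k : ℕ) :
    (Matrix.of fun i j => M i j ^ k).PosSemidef := by
  induction k with
  | zero =>
    have := Matrix.posSemidef_vecMulVec_self_star (R := ℝ) (fun _ : Fin n => (1:ℝ))
    convert this using 1
    ext i j
    simp [Matrix.vecMulVec_apply]
  | succ k ih =>
    have h : (Matrix.of fun i j => M i j ^ (k + 1)) =
        Matrix.hadamard (Matrix.of fun i j => M i j ^ k) M := by
      ext i j
      simp [Matrix.hadamard_apply, pow_succ]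
    rw [h]
    exact ih.hadamard hM

lemma aux_exp_ne {n : ℕ} (M : Matrix (Fin n) (Fin n) ℝ) (hM : M.PosSemidef)
    (hinj : ∀ i, Function.Injective (M i)) (c : Fin n → ℝ)
    (hc : ∑ i, ∑ j, c i * c j * Real.exp (M i j) = 0) : c = 0 := by
  have hs : HasSum (fun k : ℕ => ∑ i, ∑ j, c i * c j * (M i j ^ k / (k.factorial : ℝ))) 0 := by
    rw [← hc]
    refine hasSum_sum fun i _ => hasSum_sum fun j _ => HasSum.mul_left _ ?_
    rw [Real.exp_eq_exp_ℝ]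
    exact NormedSpace.expSeries_div_hasSum_exp (M i j)
  have e : ∀ k : ℕ, ∑ i, ∑ j, c i * c j * (M i j ^ k / (k.factorial : ℝ)) =
      (star c ⬝ᵥ (Matrix.of fun i j => M i j ^ k).mulVec c) / (k.factorial : ℝ) := by
    intro k
    simp only [dotProduct, Matrix.mulVec, Finset.mul_sum, Finset.sum_div]
    refine Finset.sum_congr rfl fun i _ => Finset.sum_congr rfl fun j _ => ?_
    simp only [Matrix.of_apply, Pi.star_apply, star_trivial]
    ring
  simp only [e] at hs
  have hz := (hasSum_zero_iff_of_nonneg (fun k => div_nonneg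
    ((aux_pow_psd M hM k).dotProduct_mulVec_nonneg c) (by positivity))).1 hs
  have hv : ∀ k : ℕ, (Matrix.of fun i j => M i j ^ k).mulVec c = 0 := by
    intro k
    rw [← (aux_pow_psd M hM k).dotProduct_mulVec_zero_iff]
    have := congrFun hz k
    simpa [Nat.factorial_ne_zero] using this
  by_contra hne
  obtain ⟨i, -⟩ := Function.ne_iff.1 hne
  apply hne
  refine Matrix.eq_zero_of_forall_pow_sum_mul_pow_eq_zero (hinj i) fun k => ?_
  have := congrFun (hv k) i
  simp only [Matrix.mulVec, dotProduct, Matrix.of_apply, Pi.zero_apply] at this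
  rw [← this]
  exact Finset.sum_congr rfl fun j _ => by ring

/-- The matrix `[(pᵢ + pⱼ)^(pᵢ + pⱼ)]` is nonsingular. -/
theorem stmt_1 (n : ℕ) (p : Fin n → ℝ) (hpos : ∀ i, 0 < p i) (hmono : StrictMono p) :
    (Matrix.of fun i j : Fin n => (p i + p j) ^ (p i + p j)).det ≠ 0 := by
  intro hdet
  obtain ⟨v, hv, hv0⟩ := Matrix.exists_mulVec_eq_zero_iff.2 hdet
  apply hv
  have hk : ∀ i j, (p i + p j) ^ (p i + p j) =
      Real.exp (p i * Real.log (p i)) * Real.exp (p j * Real.log (p j)) *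
        Real.exp (auxG (p i) (p j)) := by
    intro i j
    rw [Real.rpow_def_of_pos (add_pos (hpos i) (hpos j)), ← Real.exp_add, ← Real.exp_add]
    congr 1
    unfold auxG
    ring
  have := aux_exp_ne _ (auxG_psd p hpos) ?_ (fun i => v i * Real.exp (p i * Real.log (p i))) ?_
  · funext i
    have h := congrFun this i
    simpa [Real.exp_ne_zero] using h
  · intro i
    exact StrictMono.injective fun j k hjk => auxG_lt (hpos i) (hpos j) (hmono hjk)
  · have h : v ⬝ᵥ (Matrix.of fun i j : Fin n => (p i + p j) ^ (p i + p j)).mulVec v = 0 := by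
      rw [hv0]; simp
    rw [← h]
    simp only [dotProduct, Matrix.mulVec, Finset.mul_sum, Matrix.of_apply]
    refine Finset.sum_congr rfl fun i _ => Finset.sum_congr rfl fun j _ => ?_
    rw [hk]
    ring
end

section
/- Let p_1 < p_2 < ... < p_n be positive real numbers and let B be the n×n matrix with (i,j) entry (p_i + p_j)^(p_i + p_j). Then B is totally positive: every minor of B (the determinant of any square submatrix obtained by selecting rows i_1 < ... < i_k and columns j_1 < ... < j_k) is nonnegative. -/
open Filter Topology Finset

namespace XX

/-- An exponential sum with `k` distinct frequencies and `k` zeros vanishes. -/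
lemma expsum_zero (k : ℕ) : ∀ (a : Fin k → ℝ) (_ : Function.Injective a) (c : Fin k → ℝ)
    (x : Fin k → ℝ) (_ : StrictMono x)
    (_ : ∀ j, ∑ i, c i * Real.exp (a i * x j) = 0), c = 0 := by
  induction k with
  | zero => intro a _ c x _ _; exact Subsingleton.elim _ _
  | succ k ih =>
    intro a ha c x hx h
    have hder : ∀ t : ℝ, HasDerivAt (fun t => ∑ i, c i * Real.exp ((a i - a 0) * t))
        (∑ i, c i * (a i - a 0) * Real.exp ((a i - a 0) * t)) t := by
      intro t
      refine (HasDerivAt.fun_sum (u := Finset.univ)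
        (A := fun i t => c i * Real.exp ((a i - a 0) * t))
        (A' := fun i => c i * (a i - a 0) * Real.exp ((a i - a 0) * t)) fun i _ => ?_)
      have := (((hasDerivAt_id t).const_mul (a i - a 0)).exp).const_mul (c i)
      refine HasDerivAt.congr_deriv this ?_
      simp; ring
    have hz : ∀ j, (fun t => ∑ i, c i * Real.exp ((a i - a 0) * t)) (x j) = 0 := by
      intro j
      have : (fun t => ∑ i, c i * Real.exp ((a i - a 0) * t)) (x j)
          = Real.exp (-(a 0 * x j)) * ∑ i, c i * Real.exp (a i * x j) := by
        simp only [Finset.mul_sum]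
        refine Finset.sum_congr rfl fun i _ => ?_
        rw [sub_mul, sub_eq_add_neg, Real.exp_add]; ring
      rw [this, h, mul_zero]
    have hy : ∀ j : Fin k, ∃ y, y ∈ Set.Ioo (x j.castSucc) (x j.succ) ∧
        ∑ i, c i * (a i - a 0) * Real.exp ((a i - a 0) * y) = 0 := by
      intro j
      obtain ⟨y, hy, h0⟩ := exists_hasDerivAt_eq_zero (hx (Fin.castSucc_lt_succ (i := j)))
        (fun t _ => (hder t).continuousAt.continuousWithinAt) ((hz _).trans (hz _).symm)
        (fun t _ => hder t)
      exact ⟨y, hy, h0⟩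
    choose y hyI hy0 using hy
    have hymono : StrictMono y := by
      intro i j hij
      calc y i < x i.succ := (hyI i).2
        _ ≤ x j.castSucc := hx.monotone (by
            rw [Fin.le_def]; simp; exact hij)
        _ < y j := (hyI j).1
    have key := ih (fun i => a i.succ - a 0)
      (fun i j hij => by
        have : a i.succ = a j.succ := by simpa using hij
        exact Fin.succ_injective _ (ha this))
      (fun i => c i.succ * (a i.succ - a 0)) y hymono (fun j => by
        have := hy0 j
        rw [Fin.sum_univ_succ] at this
        simpa using this)
    have hs : ∀ i : Fin k, c i.succ = 0 := by
      intro i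
      have h1 : c i.succ * (a i.succ - a 0) = 0 := congrFun key i
      rcases mul_eq_zero.1 h1 with h2 | h2
      · exact h2
      · exact absurd (ha (sub_eq_zero.1 h2)) (Fin.succ_ne_zero i)
    have h0 : c 0 = 0 := by
      have := h 0
      rw [Fin.sum_univ_succ] at this
      simpa [hs, (Real.exp_pos _).ne'] using this
    funext i
    refine Fin.cases h0 hs i

lemma det_exp_ne_zero (k : ℕ) (a x : Fin k → ℝ) (ha : StrictMono a) (hx : StrictMono x) :
    (Matrix.of fun i j => Real.exp (a i * x j)).det ≠ 0 := by
  intro h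
  obtain ⟨v, hv, h0⟩ := Matrix.exists_vecMul_eq_zero_iff.2 h
  refine hv (expsum_zero k a ha.injective v x hx fun j => ?_)
  have := congrFun h0 j
  simpa [Matrix.vecMul, dotProduct] using this

lemma det_exp_pos (k : ℕ) : ∀ (a x : Fin k → ℝ) (_ : StrictMono a) (_ : StrictMono x),
    0 < (Matrix.of fun i j => Real.exp (a i * x j)).det := by
  induction k with
  | zero => intro a x _ _; simp
  | succ k ih =>
    intro a x ha hx
    set D : ℝ → ℝ := fun t => (Matrix.of fun i j =>
      Real.exp (a i * Function.update x (Fin.last k) t j)).det with hD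
    have hDx : D (x (Fin.last k)) = (Matrix.of fun i j => Real.exp (a i * x j)).det := by
      simp [hD]
    have hDcont : Continuous D := by
      refine Continuous.matrix_det ?_
      refine continuous_matrix fun i j => ?_
      simp only [Matrix.of_apply]
      have : Continuous fun t => Function.update x (Fin.last k) t j := by
        by_cases h : j = Fin.last k
        · subst h; simpa using continuous_id'
        · simpa [h] using continuous_const
      fun_prop
    have hupd : ∀ t, x (Fin.last k) ≤ t → StrictMono (Function.update x (Fin.last k) t) := by
      intro t ht i j hij
      have hi : i ≠ Fin.last k := (lt_of_lt_of_le hij (Fin.le_last j)).ne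
      rw [Function.update_of_ne hi]
      by_cases h : j = Fin.last k
      · subst h; simpa using (hx hij).trans_le ht
      · simpa [h] using hx hij
    have hne : ∀ t, x (Fin.last k) ≤ t → D t ≠ 0 := fun t ht =>
      det_exp_ne_zero _ _ _ ha (hupd t ht)
    set m : Fin (k+1) → ℝ := fun i => (-1) ^ ((i : ℕ) + k) *
      ((Matrix.of fun i j => Real.exp (a i * x j)).submatrix i.succAbove
        (Fin.last k).succAbove).det with hm
    have hexp : ∀ t, D t = ∑ i, m i * Real.exp (a i * t) := by
      intro t
      rw [hD]
      simp only
      rw [Matrix.det_succ_column _ (Fin.last k)]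
      refine Finset.sum_congr rfl fun i _ => ?_
      have : (Matrix.of fun i j =>
          Real.exp (a i * Function.update x (Fin.last k) t j)).submatrix i.succAbove
            (Fin.last k).succAbove = (Matrix.of fun i j => Real.exp (a i * x j)).submatrix
            i.succAbove (Fin.last k).succAbove := by
        ext p q
        simp
      rw [this]
      simp [hm]; ring
    have hmpos : 0 < m (Fin.last k) := by
      have h1 : 0 < (Matrix.of fun (i j : Fin k) =>
          Real.exp (a i.castSucc * x j.castSucc)).det :=
        ih (fun i => a i.castSucc) (fun i => x i.castSucc)
          (fun i j h => ha (by simpa using h)) (fun i j h => hx (by simpa using h))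
      have h2 : m (Fin.last k) = (Matrix.of fun (i j : Fin k) =>
          Real.exp (a i.castSucc * x j.castSucc)).det := by
        rw [hm]
        simp only [Fin.val_last, ← two_mul, pow_mul]
        norm_num
        congr 1
      rw [h2]; exact h1
    have hlim : Tendsto (fun t => D t * Real.exp (-(a (Fin.last k) * t))) atTop
        (𝓝 (m (Fin.last k))) := by
      have h1 : ∀ t, D t * Real.exp (-(a (Fin.last k) * t)) =
          ∑ i, m i * Real.exp ((a i - a (Fin.last k)) * t) := by
        intro t
        rw [hexp, Finset.sum_mul]
        refine Finset.sum_congr rfl fun i _ => ?_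
        rw [mul_assoc, ← Real.exp_add]; ring_nf
      simp_rw [h1]
      have h2 : m (Fin.last k) = ∑ i, if i = Fin.last k then m i else 0 := by simp
      rw [h2]
      refine tendsto_finsetSum _ fun i _ => ?_
      split_ifs with h
      · subst h; simp
      · have hlt : a i - a (Fin.last k) < 0 :=
          sub_neg.2 (ha (lt_of_le_of_ne (Fin.le_last i) h))
        have := (Real.tendsto_exp_atBot.comp
          (tendsto_id.const_mul_atTop_of_neg hlt)).const_mul (m i)
        simpa using this
    obtain ⟨T, hT, hTx⟩ := ((hlim.eventually (lt_mem_nhds hmpos)).and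
      (eventually_ge_atTop (x (Fin.last k)))).exists
    have hDT : 0 < D T := (mul_pos_iff_of_pos_right (Real.exp_pos _)).1 hT
    rw [← hDx]
    by_contra hcon
    push Not at hcon
    obtain ⟨t, ht, ht0⟩ := intermediate_value_Icc hTx hDcont.continuousOn
      (show (0:ℝ) ∈ Set.Icc _ _ from ⟨hcon, hDT.le⟩)
    exact hne t ht.1 ht0

lemma det_exp_nonneg (k : ℕ) (a x : Fin k → ℝ) (ha : Monotone a) (hx : StrictMono x) :
    0 ≤ (Matrix.of fun i j => Real.exp (a i * x j)).det := by
  by_cases h : Function.Injective a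
  · exact (det_exp_pos k a x (ha.strictMono_of_injective h) hx).le
  · simp only [Function.Injective, not_forall] at h
    obtain ⟨i, j, hij, hne⟩ := h
    rw [Matrix.det_zero_of_row_eq hne]
    funext l
    simp [hij]

/-- Symmetrised Cauchy-Binet. -/
lemma cauchy_binet {k m : ℕ} (A : Matrix (Fin k) (Fin m) ℝ) (B : Matrix (Fin m) (Fin k) ℝ) :
    (Fintype.card (Equiv.Perm (Fin k)) : ℝ) * (A * B).det =
      ∑ p : Fin k → Fin m, (A.submatrix id p).det * (B.submatrix p id).det := by
  have h1 : (A * B).det = ∑ p : Fin k → Fin m, (A.submatrix id p).det * ∏ i, B (p i) i := by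
    simp only [Matrix.det_apply', Matrix.mul_apply, prod_univ_sum, mul_sum,
      Fintype.piFinset_univ]
    rw [Finset.sum_comm]
    refine Finset.sum_congr rfl fun p _ => ?_
    rw [Finset.sum_mul]
    refine Finset.sum_congr rfl fun σ _ => ?_
    simp [Finset.prod_mul_distrib, mul_assoc]
  have h2 : ∀ τ : Equiv.Perm (Fin k), (A * B).det = ∑ p : Fin k → Fin m,
      (A.submatrix id p).det * ((Equiv.Perm.sign τ : ℤ) * ∏ i, B (p (τ i)) i) := by
    intro τ
    rw [h1]
    refine (Fintype.sum_equiv (Equiv.arrowCongr τ (Equiv.refl _)) _ _ fun p => ?_)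
    have h3 : A.submatrix id ((Equiv.arrowCongr τ (Equiv.refl (Fin m))) p) =
        (A.submatrix id p).submatrix id (τ.symm : Equiv.Perm (Fin k)) := by
      ext i j; simp [Equiv.arrowCongr]
    rw [h3, Matrix.det_permute']
    have h4 : ((Equiv.Perm.sign τ : ℤ) : ℝ) * ((Equiv.Perm.sign τ : ℤ) : ℝ) = 1 := by
      norm_cast; simp
    have h5 : Equiv.Perm.sign (τ.symm : Equiv.Perm (Fin k)) = Equiv.Perm.sign τ :=
      Equiv.Perm.sign_symm τ
    rw [h5]
    simp only [Equiv.arrowCongr_apply, Function.comp, Equiv.refl_apply, Equiv.symm_apply_apply]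
    linear_combination (-(A.submatrix id p).det * ∏ i, B (p i) i) * h4
  have h6 : (Fintype.card (Equiv.Perm (Fin k)) : ℝ) * (A * B).det =
      ∑ _τ : Equiv.Perm (Fin k), (A * B).det := by simp
  rw [h6, Finset.sum_congr rfl fun τ _ => h2 τ, Finset.sum_comm]
  refine Finset.sum_congr rfl fun p _ => ?_
  rw [← Finset.mul_sum, Matrix.det_apply' (B.submatrix p id)]
  simp

lemma det_sum_nonneg {k m : ℕ} (a b : Fin m → ℝ) (x y : Fin k → ℝ) (hx : StrictMono x)
    (hy : StrictMono y) :
    0 ≤ (Matrix.of fun i j => ∑ l, Real.exp (a l * (x i + y j) + b l)).det := by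
  set A : Matrix (Fin k) (Fin m) ℝ := Matrix.of fun i l => Real.exp (b l) * Real.exp (a l * x i)
  set B : Matrix (Fin m) (Fin k) ℝ := Matrix.of fun l j => Real.exp (a l * y j)
  have hAB : (Matrix.of fun i j => ∑ l, Real.exp (a l * (x i + y j) + b l)) = A * B := by
    ext i j
    simp only [A, B, Matrix.mul_apply, Matrix.of_apply]
    refine Finset.sum_congr rfl fun l _ => ?_
    rw [← Real.exp_add, ← Real.exp_add]; ring_nf
  rw [hAB]
  have hc : (0 : ℝ) < Fintype.card (Equiv.Perm (Fin k)) := by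
    exact_mod_cast Fintype.card_pos
  refine (mul_nonneg_iff_of_pos_left hc).1 ?_
  rw [cauchy_binet]
  refine Finset.sum_nonneg fun p _ => ?_
  set σ := Tuple.sort (a ∘ p)
  have hmono : Monotone ((a ∘ p) ∘ σ) := Tuple.monotone_sort _
  have hA : (A.submatrix id p).det = (∏ l, Real.exp (b (p l))) *
      (Matrix.of fun i j => Real.exp ((a ∘ p) i * x j)).det := by
    rw [← Matrix.det_transpose (Matrix.of _), ← Matrix.det_mul_row]
    congr 1
  have hB : (B.submatrix p id).det = (Matrix.of fun i j => Real.exp ((a ∘ p) i * y j)).det := by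
    congr 1
  have hp : ∀ z : Fin k → ℝ, StrictMono z → 0 ≤ ((Equiv.Perm.sign σ : ℤ) : ℝ) *
      (Matrix.of fun i j => Real.exp ((a ∘ p) i * z j)).det := by
    intro z hz
    rw [← Matrix.det_permute]
    exact det_exp_nonneg k _ z hmono hz
  have h4 : ((Equiv.Perm.sign σ : ℤ) : ℝ) * ((Equiv.Perm.sign σ : ℤ) : ℝ) = 1 := by
    norm_cast; simp
  rw [hA, hB, mul_assoc]
  refine mul_nonneg (Finset.prod_nonneg fun _ _ => (Real.exp_pos _).le) ?_
  have := mul_nonneg (hp x hx) (hp y hy)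
  calc _ ≤ _ := this
    _ = _ := by
      linear_combination ((Matrix.of fun i j => Real.exp ((a ∘ p) i * x j)).det *
        (Matrix.of fun i j => Real.exp ((a ∘ p) i * y j)).det) * h4

abbrev P := {x : ℝ // 0 < x}

/-- exponentials of affine functions -/
def M0 : Submonoid (P → ℝ) where
  carrier := {f | ∃ a b : ℝ, f = fun x : P => Real.exp (a * x + b)}
  one_mem' := ⟨0, 0, by ext; simp⟩
  mul_mem' := by
    rintro _ _ ⟨a, b, rfl⟩ ⟨c, d, rfl⟩
    refine ⟨a + c, b + d, ?_⟩
    ext x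
    simp only [Pi.mul_apply, ← Real.exp_add]
    ring_nf

noncomputable def C : Subsemiring (P → ℝ) := M0.subsemiringClosure.topologicalClosure

lemma C_closed : IsClosed (C : Set (P → ℝ)) := Subsemiring.isClosed_topologicalClosure _

lemma exp_mem (a b : ℝ) : (fun x : P => Real.exp (a * x + b)) ∈ C := by
  refine Subsemiring.le_topologicalClosure _ ?_
  exact AddSubmonoid.subset_closure ⟨a, b, rfl⟩

lemma const_mem (c : ℝ) (hc : 0 < c) : (fun _ : P => c) ∈ C := by
  have := exp_mem 0 (Real.log c)
  simpa [Real.exp_log hc] using this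

lemma mem_of_hasSum (f : ℕ → P → ℝ) (g : P → ℝ) (hf : ∀ n, f n ∈ C)
    (h : ∀ x, HasSum (fun n => f n x) (g x)) : g ∈ C := by
  have : HasSum f g := Pi.hasSum.2 h
  exact C_closed.mem_of_tendsto this (Eventually.of_forall fun s => C.sum_mem fun i _ => hf i)

lemma exp_comp_mem (f : P → ℝ) (hf : f ∈ C) : (fun x => Real.exp (f x)) ∈ C := by
  refine mem_of_hasSum (fun n x => (n.factorial : ℝ)⁻¹ * f x ^ n) _ (fun n => ?_) fun x => ?_
  · exact C.mul_mem (const_mem _ (by positivity)) (C.pow_mem hf n)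
  · have := NormedSpace.expSeries_div_hasSum_exp (𝔸 := ℝ) (f x)
    rw [← Real.exp_eq_exp_ℝ] at this
    simpa [div_eq_inv_mul] using this

lemma C_det {k : ℕ} (x y : Fin k → ℝ) (hx : StrictMono x) (hy : StrictMono y)
    (hpos : ∀ i j, 0 < x i + y j) (f : P → ℝ) (hf : f ∈ C) :
    0 ≤ (Matrix.of fun i j => f ⟨x i + y j, hpos i j⟩).det := by
  have hcl : IsClosed {f : P → ℝ | 0 ≤ (Matrix.of fun i j => f ⟨x i + y j, hpos i j⟩).det} := by
    refine isClosed_le continuous_const (Continuous.matrix_det ?_)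
    refine continuous_matrix fun i j => ?_
    simp only [Matrix.of_apply]
    fun_prop
  refine closure_minimal ?_ hcl hf
  intro g hg
  obtain ⟨l, hl, rfl⟩ := AddSubmonoid.exists_list_of_mem_closure
    (show g ∈ AddSubmonoid.closure (M0 : Set (P → ℝ)) from hg)
  have h1 : ∀ i : Fin l.length, ∃ a b : ℝ, l.get i = fun x : P => Real.exp (a * x + b) :=
    fun i => hl _ (List.get_mem _ _)
  choose a b hab using h1
  have h2 : l.sum = ∑ i : Fin l.length, l.get i := by
    simp
  have := det_sum_nonneg a b x y hx hy
  simp only [Set.mem_setOf_eq]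
  convert this using 3
  ext i j
  rw [h2]
  simp only [hab, Finset.sum_apply, Matrix.of_apply]

/-- `Li₂(exp(-u))` -/
noncomputable def G (u : ℝ) : ℝ := ∑' n : ℕ, Real.exp (-((n + 1 : ℝ) * u)) / (n + 1 : ℝ) ^ 2

lemma summ_sq : Summable fun n : ℕ => 1 / (n + 1 : ℝ) ^ 2 := by
  have := (summable_nat_add_iff 1).2 (Real.summable_one_div_nat_pow.2 (by norm_num : 1 < 2))
  simpa using this

lemma G_bound (n : ℕ) (u : ℝ) (hu : 0 ≤ u) :
    ‖Real.exp (-((n + 1 : ℝ) * u)) / (n + 1 : ℝ) ^ 2‖ ≤ 1 / (n + 1 : ℝ) ^ 2 := by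
  rw [Real.norm_of_nonneg (by positivity)]
  gcongr
  rw [Real.exp_le_one_iff]
  have : 0 ≤ (n + 1 : ℝ) * u := by positivity
  linarith

lemma G_hasSum (u : ℝ) (hu : 0 ≤ u) :
    HasSum (fun n : ℕ => Real.exp (-((n + 1 : ℝ) * u)) / (n + 1 : ℝ) ^ 2) (G u) :=
  (Summable.of_norm_bounded summ_sq fun n => G_bound n u hu).hasSum

lemma G_cont : ContinuousOn G (Set.Ici 0) := by
  refine continuousOn_tsum (fun n => ?_) summ_sq fun n u hu => G_bound n u hu
  fun_prop

lemma G_deriv (u : ℝ) (hu : 0 < u) : HasDerivAt G (Real.log (1 - Real.exp (-u))) u := by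
  have hlt : Real.exp (-u) < 1 := by rw [Real.exp_lt_one_iff]; linarith
  have hlt2 : Real.exp (-(u/2)) < 1 := by rw [Real.exp_lt_one_iff]; linarith
  have hlog : HasSum (fun n : ℕ => -(Real.exp (-((n + 1 : ℝ) * u)) / (n + 1 : ℝ)))
      (Real.log (1 - Real.exp (-u))) := by
    have := (Real.hasSum_pow_div_log_of_abs_lt_one (x := Real.exp (-u))
      (by rwa [abs_of_pos (Real.exp_pos _)])).neg
    rw [neg_neg] at this
    refine this.congr_fun fun n => ?_
    rw [← Real.exp_nat_mul]
    push_cast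
    ring_nf
  rw [← hlog.tsum_eq]
  refine hasDerivAt_tsum_of_isPreconnected (u := fun n : ℕ => Real.exp (-(u/2)) ^ n)
    (t := Set.Ioi (u/2)) (y₀ := u) (g' := fun n u => -(Real.exp (-((n + 1 : ℝ) * u)) / (n + 1 : ℝ)))
    (summable_geometric_of_lt_one (Real.exp_pos _).le hlt2) isOpen_Ioi isPreconnected_Ioi
    ?_ ?_ ?_ (G_hasSum u hu.le).summable ?_
  · intro n y _
    have := ((((hasDerivAt_id y).const_mul (n + 1 : ℝ)).neg).exp).div_const ((n + 1 : ℝ) ^ 2)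
    refine HasDerivAt.congr_deriv this ?_
    have : (n + 1 : ℝ) ≠ 0 := by positivity
    simp
    field_simp
    ring
  · intro n y hy
    have hy : u / 2 < y := hy
    rw [norm_neg, Real.norm_of_nonneg (by positivity), ← Real.exp_nat_mul]
    refine (div_le_self (Real.exp_pos _).le (by linarith [n.cast_nonneg (α := ℝ)])).trans ?_
    rw [Real.exp_le_exp]
    have : (n : ℝ) * (u/2) ≤ n * y := by gcongr
    nlinarith
  · simp; linarith
  · simp; linarith

lemma H_deriv : HasDerivWithinAt (fun u => G u - G 0 + u - u * Real.log u) 0 (Set.Ici 0) 0 := by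
  have hd : ∀ u : ℝ, 0 < u → HasDerivAt (fun u => G u - G 0 + u - u * Real.log u)
      (Real.log (1 - Real.exp (-u)) - Real.log u) u := by
    intro u hu
    have := ((((G_deriv u hu).sub_const (G 0)).add (hasDerivAt_id u))).sub
      (Real.hasDerivAt_mul_log hu.ne')
    refine HasDerivAt.congr_deriv this ?_
    ring
  refine hasDerivWithinAt_Ici_of_tendsto_deriv (s := Set.Ioi 0)
    (fun u hu => (hd u hu).differentiableAt.differentiableWithinAt) ?_ self_mem_nhdsWithin ?_
  · have h1 : ContinuousWithinAt G (Set.Ioi 0) 0 :=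
      (G_cont 0 (by simp)).mono Set.Ioi_subset_Ici_self
    have h2 : ContinuousWithinAt (fun u : ℝ => u * Real.log u) (Set.Ioi 0) 0 :=
      Real.continuous_mul_log.continuousWithinAt
    exact ((h1.sub continuousWithinAt_const).add continuousWithinAt_id).sub h2
  · have hq : Tendsto (fun u : ℝ => (1 - Real.exp (-u)) / u) (𝓝[>] 0) (𝓝 1) := by
      have h1 : HasDerivAt (fun u : ℝ => 1 - Real.exp (-u)) 1 0 := by
        have := ((hasDerivAt_id (0:ℝ)).neg.exp).const_sub 1
        refine HasDerivAt.congr_deriv this ?_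
        simp
      have h2 := h1.tendsto_slope_zero_right
      refine h2.congr fun u => ?_
      simp [div_eq_inv_mul]
    have hl := (Real.continuousAt_log one_ne_zero).tendsto.comp hq
    rw [Real.log_one] at hl
    refine hl.congr' ?_
    filter_upwards [self_mem_nhdsWithin] with u hu
    have hu : 0 < u := hu
    have : Real.exp (-u) < 1 := by rw [Real.exp_lt_one_iff]; linarith
    rw [(hd u hu).deriv, Function.comp, Real.log_div (by linarith) hu.ne']

lemma xx_mem : (fun x : P => (x : ℝ) ^ (x : ℝ)) ∈ C := by
  have hmem : ∀ h : ℝ, 0 < h → (fun x : P => Real.exp (h⁻¹ * G (h * x)) *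
      Real.exp ((1 - Real.log h) * x + (-(G 0 / h)))) ∈ C := by
    intro h hh
    refine C.mul_mem (exp_comp_mem _ ?_) (exp_mem _ _)
    refine C.mul_mem (const_mem _ (inv_pos.2 hh)) ?_
    refine mem_of_hasSum (fun n x => ((n + 1 : ℝ) ^ 2)⁻¹ *
      Real.exp (-((n + 1 : ℝ) * h) * x + 0)) _ (fun n => ?_) fun x => ?_
    · exact C.mul_mem (const_mem _ (by positivity)) (exp_mem _ _)
    · refine (G_hasSum (h * x) (mul_pos hh x.2).le).congr_fun fun n => ?_
      rw [div_eq_inv_mul]; ring_nf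
  refine C_closed.mem_of_tendsto (b := 𝓝[>] (0:ℝ)) (f := fun h => (fun x : P =>
    Real.exp (h⁻¹ * G (h * x)) * Real.exp ((1 - Real.log h) * x + (-(G 0 / h))))) ?_ ?_
  · rw [tendsto_pi_nhds]
    rintro ⟨x, hx⟩
    have h1 : Tendsto (fun u : ℝ => u⁻¹ * (G u - G 0 + u - u * Real.log u)) (𝓝[>] 0) (𝓝 0) := by
      have := H_deriv.Ioi_of_Ici
      rw [hasDerivWithinAt_iff_tendsto_slope' (by simp)] at this
      refine this.congr fun u => ?_
      simp [slope]
    have h2 : Tendsto (fun h : ℝ => h * x) (𝓝[>] 0) (𝓝[>] 0) := by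
      refine tendsto_nhdsWithin_iff.2 ⟨?_, ?_⟩
      · have : Tendsto (fun h : ℝ => h * x) (𝓝 0) (𝓝 (0 * x)) :=
          (continuous_id.mul continuous_const).tendsto 0
        rw [zero_mul] at this
        exact this.mono_left nhdsWithin_le_nhds
      · filter_upwards [self_mem_nhdsWithin] with h hh
        exact mul_pos hh hx
    have h3 := (((h1.comp h2).const_mul x).add_const (x * Real.log x)).rexp
    have h4 : Real.exp (x * 0 + x * Real.log x) = x ^ x := by
      rw [Real.rpow_def_of_pos hx]; ring_nf
    rw [h4] at h3
    refine h3.congr' ?_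
    filter_upwards [self_mem_nhdsWithin] with h hh
    have hh : 0 < h := hh
    rw [← Real.exp_add]
    congr 1
    simp only [Function.comp]
    rw [Real.log_mul hh.ne' hx.ne']
    field_simp
    ring
  · filter_upwards [self_mem_nhdsWithin] with h hh
    exact hmem h hh

end XX

/-- The matrix `[(pᵢ + pⱼ)^(pᵢ + pⱼ)]` is totally positive: every minor is
nonnegative. -/
theorem stmt_3 (n : ℕ) (p : Fin n → ℝ) (hpos : ∀ i, 0 < p i) (hmono : StrictMono p)
    (k : ℕ) (f g : Fin k → Fin n) (hf : StrictMono f) (hg : StrictMono g) :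
    0 ≤ ((Matrix.of fun i j : Fin n => (p i + p j) ^ (p i + p j)).submatrix f g).det := by
  exact XX.C_det (p ∘ f) (p ∘ g) (hmono.comp hf) (hmono.comp hg)
    (fun i j => add_pos (hpos _) (hpos _)) _ XX.xx_mem
end

section
/- Let p_1 < p_2 < ... < p_n be positive real numbers and let C be the n×n matrix with (i,j) entry (p_i + p_j) · log(p_i + p_j). Then ⟨x, Cx⟩ > 0 for every nonzero vector x ∈ ℝ^n with Σ_i x_i = 0. -/
open Matrix

open Filter Topology in
/-- A function with nonpositive derivative on `[0,∞)` tending to zero is nonnegative. -/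
lemma nonneg_aux (f g : ℝ → ℝ) (hd : ∀ t, 0 ≤ t → HasDerivAt f (g t) t)
    (hf : ∀ t, 0 ≤ t → g t ≤ 0) (hl : Tendsto f atTop (𝓝 0)) :
    AntitoneOn f (Set.Ici 0) ∧ ∀ t, 0 ≤ t → 0 ≤ f t := by
  have ha : AntitoneOn f (Set.Ici 0) := by
    apply antitoneOn_of_deriv_nonpos (convex_Ici 0)
    · intro t ht; exact (hd t ht).continuousAt.continuousWithinAt
    · intro t ht
      rw [interior_Ici] at ht
      exact (hd t (le_of_lt ht)).differentiableAt.differentiableWithinAt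
    · intro t ht
      rw [interior_Ici] at ht
      rw [(hd t (le_of_lt ht)).deriv]; exact hf t (le_of_lt ht)
  refine ⟨ha, fun t ht => ?_⟩
  apply le_of_tendsto hl
  filter_upwards [eventually_ge_atTop t] with s hs
  exact ha ht (le_trans ht hs) hs

open Filter Topology in
lemma pos_aux (f g : ℝ → ℝ) (hd : ∀ t, 0 ≤ t → HasDerivAt f (g t) t)
    (hf : ∀ t, 0 ≤ t → g t ≤ 0) (hl : Tendsto f atTop (𝓝 0))
    (u : ℝ) (hu : 0 < u) (hfu : g u ≠ 0) : 0 < f 0 := by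
  obtain ⟨ha, hn⟩ := nonneg_aux f g hd hf hl
  rcases (hn 0 le_rfl).lt_or_eq with h | h
  · exact h
  exfalso
  apply hfu
  have he : f =ᶠ[𝓝 u] fun _ => 0 := by
    filter_upwards [lt_mem_nhds hu] with s hs
    exact le_antisymm (h ▸ ha (Set.mem_Ici.2 le_rfl) (le_of_lt hs) (le_of_lt hs)) (hn s hs.le)
  exact (hd u hu.le).unique ((hasDerivAt_const u (0:ℝ)).congr_of_eventuallyEq he)

open Filter Topology in
lemma cauchy_pos (n : ℕ) (q : Fin n → ℝ) (hpos : ∀ i, 0 < q i) (hinj : Function.Injective q)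
    (x : Fin n → ℝ) (hx0 : x ≠ 0) : 0 < ∑ i, ∑ j, x i * x j * (1 / (q i + q j)) := by
  obtain ⟨k, hk⟩ : ∃ k : ℕ, ∑ i, x i * Real.exp (-(q i) * ((k:ℝ) + 1)) ≠ 0 := by
    by_contra! h
    apply hx0
    have hv : (fun i => x i * Real.exp (-(q i))) = 0 := by
      apply Matrix.eq_zero_of_forall_pow_sum_mul_pow_eq_zero
        (f := fun i => Real.exp (-(q i)))
      · intro a b hab
        exact hinj (neg_injective (Real.exp_injective hab))
      · intro k
        rw [← h k]
        refine Finset.sum_congr rfl fun i _ => ?_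
        rw [← Real.exp_nat_mul, mul_assoc, ← Real.exp_add]
        congr 2
        ring
    funext i
    have := congrFun hv i
    simpa using this
  have := pos_aux (fun u => ∑ i, ∑ j, x i * x j * (1 / (q i + q j)) * Real.exp (-(q i + q j) * u))
    (fun u => -(∑ i, x i * Real.exp (-(q i) * u)) ^ 2) ?_ ?_ ?_ ((k:ℝ) + 1) (by positivity) ?_
  · simpa using this
  · intro t _
    have e : -(∑ i, x i * Real.exp (-(q i) * t)) ^ 2 = ∑ i, ∑ j, x i * x j * (1 / (q i + q j)) *
        (Real.exp (-(q i + q j) * t) * (-(q i + q j))) := by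
      rw [sq, Finset.sum_mul_sum, ← Finset.sum_neg_distrib]
      refine Finset.sum_congr rfl fun i _ => ?_
      rw [← Finset.sum_neg_distrib]
      refine Finset.sum_congr rfl fun j _ => ?_
      have : q i + q j ≠ 0 := (add_pos (hpos i) (hpos j)).ne'
      rw [show -(q i + q j) * t = -(q i) * t + -(q j) * t by ring, Real.exp_add]
      field_simp
    simp only [e]
    refine HasDerivAt.fun_sum fun i _ => HasDerivAt.fun_sum fun j _ => ?_
    refine HasDerivAt.const_mul _ (HasDerivAt.exp ?_)
    simpa using (hasDerivAt_id t).const_mul (-(q i + q j))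
  · intro t _
    simp only [Left.neg_nonpos_iff]; positivity
  · rw [show (0:ℝ) = ∑ i : Fin n, ∑ j : Fin n, x i * x j * (1 / (q i + q j)) * 0 by simp]
    refine tendsto_finsetSum _ fun i _ => tendsto_finsetSum _ fun j _ => ?_
    refine Tendsto.const_mul _ (Real.tendsto_exp_atBot.comp ?_)
    exact tendsto_id.const_mul_atTop_of_neg (by linarith [hpos i, hpos j])
  · simpa using hk

open Filter Topology in
lemma lim_log (s : ℝ) : Tendsto (fun t : ℝ => Real.log (s + t) - Real.log t) atTop (𝓝 0) := by
  have h1 : Tendsto (fun t : ℝ => 1 + s / t) atTop (𝓝 (1 + 0)) :=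
    tendsto_const_nhds.add (tendsto_const_nhds.div_atTop tendsto_id)
  have h2 := h1.log (by norm_num)
  simp only [add_zero, Real.log_one] at h2
  refine h2.congr' ?_
  filter_upwards [eventually_gt_atTop 0, eventually_gt_atTop (-s)] with t ht hts
  rw [← Real.log_div (by linarith) (by linarith)]
  congr 1
  field_simp
  ring

open Filter Topology in
lemma lim_mul_log (s : ℝ) :
    Tendsto (fun t : ℝ => (s + t) * (Real.log (s + t) - Real.log t)) atTop (𝓝 s) := by
  have h1 := (Real.tendsto_mul_log_one_add_div_atTop s).add ((lim_log s).const_mul s)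
  simp only [mul_zero, add_zero] at h1
  refine h1.congr' ?_
  filter_upwards [eventually_gt_atTop 0, eventually_gt_atTop (-s)] with t ht hts
  rw [← Real.log_div (by linarith) (by linarith)]
  rw [show 1 + s / t = (s + t) / t by field_simp; ring]
  ring

open Filter Topology in
/-- The quadratic form of `C = [(pᵢ + pⱼ) log (pᵢ + pⱼ)]` is strictly positive on
nonzero vectors whose coordinates sum to zero. -/
theorem stmt_6 (n : ℕ) (p : Fin n → ℝ) (hpos : ∀ i, 0 < p i) (hmono : StrictMono p)
    (x : Fin n → ℝ) (hx : ∑ i, x i = 0) (hx0 : x ≠ 0) :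
    0 < x ⬝ᵥ (Matrix.of fun i j : Fin n =>
      (p i + p j) * Real.log (p i + p j)).mulVec x := by
  have z0 : ∀ c : ℝ, ∑ i, ∑ j, x i * x j * c = 0 := by
    intro c
    simp_rw [← Finset.sum_mul, ← Finset.mul_sum, hx]
    simp
  have z1 : ∑ i, ∑ j, x i * x j * (p i + p j) = 0 := by
    have : ∀ i j, x i * x j * (p i + p j) = (x i * p i) * x j + x i * (x j * p j) := by
      intros; ring
    simp_rw [this, Finset.sum_add_distrib, ← Finset.mul_sum, ← Finset.sum_mul, hx]
    simp
  have z2 : ∀ t c : ℝ, ∑ i, ∑ j, x i * x j * ((p i + p j + t) * c) = 0 := by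
    intro t c
    have : ∀ i j, x i * x j * ((p i + p j + t) * c)
        = x i * x j * (p i + p j) * c + x i * x j * (t * c) := by
      intros; ring
    simp_rw [this, Finset.sum_add_distrib, z0, ← Finset.sum_mul, z1]
    simp
  have hs : ∀ i j, 0 < p i + p j := fun i j => add_pos (hpos i) (hpos j)
  set F := fun t : ℝ => ∑ i, ∑ j, x i * x j * ((p i + p j + t) * Real.log (p i + p j + t)) with hF
  set F1 := fun t : ℝ => ∑ i, ∑ j, x i * x j * Real.log (p i + p j + t) with hF1
  set F2 := fun t : ℝ => ∑ i, ∑ j, x i * x j * (1 / (p i + p j + t)) with hF2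
  have hF2pos : ∀ t, 0 ≤ t → 0 < F2 t := by
    intro t ht
    have := cauchy_pos n (fun i => p i + t / 2) (fun i => by have := hpos i; positivity)
      (fun a b hab => hmono.injective (by simpa using hab)) x hx0
    refine this.trans_eq ?_
    refine Finset.sum_congr rfl fun i _ => Finset.sum_congr rfl fun j _ => ?_
    rw [show p i + t / 2 + (p j + t / 2) = p i + p j + t by ring]
  have hd1 : ∀ t, 0 ≤ t → HasDerivAt F1 (F2 t) t := by
    intro t ht
    refine HasDerivAt.fun_sum fun i _ => HasDerivAt.fun_sum fun j _ => ?_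
    refine HasDerivAt.const_mul _ (HasDerivAt.log ((hasDerivAt_id t).const_add _) ?_)
    have := hs i j
    positivity
  have hd : ∀ t, 0 ≤ t → HasDerivAt F (F1 t) t := by
    intro t ht
    have e : F1 t = ∑ i, ∑ j, x i * x j * (Real.log (p i + p j + t) + 1) := by
      simp_rw [mul_add, Finset.sum_add_distrib, z0, add_zero, hF1]
    rw [e]
    refine HasDerivAt.fun_sum fun i _ => HasDerivAt.fun_sum fun j _ => ?_
    refine HasDerivAt.const_mul _ ?_
    have := hs i j
    have h := (Real.hasDerivAt_mul_log (x := p i + p j + t) (by positivity)).comp t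
      ((hasDerivAt_id t).const_add (p i + p j))
    simpa [Function.comp_def] using h
  have hl1 : Tendsto F1 atTop (𝓝 0) := by
    have e : F1 = fun t => ∑ i, ∑ j, x i * x j * (Real.log (p i + p j + t) - Real.log t) := by
      funext t
      simp_rw [mul_sub, Finset.sum_sub_distrib, z0, sub_zero, hF1]
    rw [e, ← z0 0]
    exact tendsto_finsetSum _ fun i _ => tendsto_finsetSum _ fun j _ => (lim_log _).const_mul _
  have hl : Tendsto F atTop (𝓝 0) := by
    have e : F = fun t => ∑ i, ∑ j,
        x i * x j * ((p i + p j + t) * (Real.log (p i + p j + t) - Real.log t)) := by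
      funext t
      simp_rw [mul_sub, Finset.sum_sub_distrib, z2, sub_zero, hF]
    rw [e, ← z1]
    exact tendsto_finsetSum _ fun i _ => tendsto_finsetSum _ fun j _ => (lim_mul_log _).const_mul _
  have hneg := nonneg_aux (fun t => - F1 t) (fun t => - F2 t) (fun t ht => (hd1 t ht).neg)
    (fun t ht => by linarith [hF2pos t ht]) (by simpa using hl1.neg)
  have hF1n : ∀ t, 0 ≤ t → F1 t ≤ 0 := fun t ht => by linarith [hneg.2 t ht]
  have hex : ∃ u, 0 < u ∧ F1 u ≠ 0 := by
    by_contra! h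
    have he : F1 =ᶠ[𝓝 1] fun _ => 0 := by
      filter_upwards [lt_mem_nhds (zero_lt_one)] with s hs
      exact h s hs
    have := (hd1 1 zero_le_one).unique ((hasDerivAt_const (1:ℝ) (0:ℝ)).congr_of_eventuallyEq he)
    linarith [hF2pos 1 zero_le_one]
  obtain ⟨u, hu, hune⟩ := hex
  have hfin := pos_aux F F1 hd hF1n hl u hu hune
  convert hfin using 1
  simp only [hF, dotProduct, Matrix.mulVec, Matrix.of_apply, add_zero, Finset.mul_sum]
  refine Finset.sum_congr rfl fun i _ => Finset.sum_congr rfl fun j _ => ?_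
  ring
end

section
/- Let p_1 < p_2 < ... < p_n be positive real numbers and let λ > 0. Then the n×n matrix with (i,j) entry (p_i + p_j)/(p_i + p_j + λ) is conditionally negative definite, i.e. ⟨x, Sx⟩ ≤ 0 for every vector x ∈ ℝ^n with Σ_i x_i = 0. -/
open Matrix

lemma cauchy_psd (n : ℕ) (q : Fin n → ℝ) (hq : ∀ i, 0 < q i) (x : Fin n → ℝ) :
    0 ≤ ∑ i, ∑ j, x i * x j * (1 / (q i + q j)) := by
  have hI : ∀ i j, MeasureTheory.IntegrableOn
      (fun t : ℝ => Real.exp (-(q i + q j) * t)) (Set.Ioi 0) := fun i j =>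
    integrableOn_exp_mul_Ioi (by linarith [hq i, hq j]) 0
  have hv : ∀ i j, ∫ t in Set.Ioi (0:ℝ), Real.exp (-(q i + q j) * t) = 1 / (q i + q j) := by
    intro i j
    rw [integral_exp_mul_Ioi (by linarith [hq i, hq j]) 0]
    rw [neg_div_neg_eq, mul_zero, Real.exp_zero]
  have key : ∑ i, ∑ j, x i * x j * (1 / (q i + q j)) =
      ∫ t in Set.Ioi (0:ℝ), (∑ i, x i * Real.exp (-(q i) * t)) ^ 2 := by
    have : ∀ t : ℝ, (∑ i, x i * Real.exp (-(q i) * t)) ^ 2 =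
        ∑ i, ∑ j, x i * x j * Real.exp (-(q i + q j) * t) := by
      intro t
      rw [sq, Finset.sum_mul_sum]
      refine Finset.sum_congr rfl fun i _ => Finset.sum_congr rfl fun j _ => ?_
      rw [show -(q i + q j) * t = -(q i) * t + -(q j) * t by ring, Real.exp_add]
      ring
    simp_rw [this]
    rw [MeasureTheory.integral_finsetSum]
    · refine Finset.sum_congr rfl fun i _ => ?_
      rw [MeasureTheory.integral_finsetSum]
      · refine Finset.sum_congr rfl fun j _ => ?_
        rw [MeasureTheory.integral_const_mul, hv]
      · exact fun j _ => (hI i j).const_mul _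
    · exact fun i _ => MeasureTheory.integrable_finsetSum _ fun j _ => (hI i j).const_mul _
  rw [key]
  exact MeasureTheory.integral_nonneg fun t => sq_nonneg _

/-- For `λ > 0`, the matrix `[(pᵢ + pⱼ)/(pᵢ + pⱼ + λ)]` is conditionally negative
definite. -/
theorem stmt_9 (n : ℕ) (p : Fin n → ℝ) (hpos : ∀ i, 0 < p i) (hmono : StrictMono p)
    (l : ℝ) (hl : 0 < l) (x : Fin n → ℝ) (hx : ∑ i, x i = 0) :
    x ⬝ᵥ (Matrix.of fun i j : Fin n => (p i + p j) / (p i + p j + l)).mulVec x ≤ 0 := by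
  have h := cauchy_psd n (fun i => p i + l / 2) (fun i => by linarith [hpos i]) x
  have e : x ⬝ᵥ (Matrix.of fun i j : Fin n => (p i + p j) / (p i + p j + l)).mulVec x =
      (∑ i, x i) * (∑ j, x j) -
        l * ∑ i, ∑ j, x i * x j * (1 / ((p i + l / 2) + (p j + l / 2))) := by
    rw [Finset.sum_mul_sum, Finset.mul_sum, ← Finset.sum_sub_distrib]
    simp only [dotProduct, mulVec, Matrix.of_apply]
    refine Finset.sum_congr rfl fun i _ => ?_
    rw [Finset.mul_sum, Finset.mul_sum, ← Finset.sum_sub_distrib]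
    refine Finset.sum_congr rfl fun j _ => ?_
    have h1 : p i + p j + l ≠ 0 := by
      have := hpos i
      have := hpos j
      positivity
    rw [show (p i + l / 2) + (p j + l / 2) = p i + p j + l by ring]
    field_simp
    ring
  rw [e, hx]
  have := mul_nonneg hl.le h
  linarith
end

section
/- Let A be the n×n matrix with (i,j) entry (i+j−1)^(i+j−1) for 1 ≤ i, j ≤ n. Then for every real number r > 0, the entrywise power A^{∘r} (with (i,j) entry (i+j−1)^{(i+j−1)r}) is strictly totally positive: every minor of A^{∘r} is strictly positive. -/
open Finset

/-- generalized exponential sums with too many zeros vanish -/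
lemma expsum_zero : ∀ (n : ℕ) (c x t : Fin n → ℝ), StrictMono x → StrictMono t →
    (∀ j, ∑ i, c i * Real.exp (x i * t j) = 0) → ∀ i, c i = 0 := by
  intro n
  induction n with
  | zero => intro c x t _ _ _ i; exact i.elim0
  | succ n ih =>
    intro c x t hx ht h
    -- normalised function
    set F : ℝ → ℝ := fun u => ∑ i, c i * Real.exp ((x i - x 0) * u) with hF
    have hF0 : ∀ j, F (t j) = 0 := by
      intro j
      have : F (t j) = Real.exp (-(x 0 * t j)) * ∑ i, c i * Real.exp (x i * t j) := by
        rw [hF, Finset.mul_sum]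
        refine Finset.sum_congr rfl fun i _ => ?_
        rw [mul_left_comm, ← Real.exp_add]; ring_nf
      rw [this, h j, mul_zero]
    have hd : ∀ u, HasDerivAt F (∑ i, c i * ((x i - x 0) * Real.exp ((x i - x 0) * u))) u := by
      intro u
      refine HasDerivAt.fun_sum fun i _ => ?_
      refine HasDerivAt.const_mul _ ?_
      have := ((hasDerivAt_id u).const_mul (x i - x 0)).exp
      simpa [mul_comm] using this
    have hR : ∀ j : Fin n, ∃ u, u ∈ Set.Ioo (t j.castSucc) (t j.succ) ∧
        ∑ i, c i * ((x i - x 0) * Real.exp ((x i - x 0) * u)) = 0 := by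
      intro j
      obtain ⟨u, hu, hu'⟩ := exists_hasDerivAt_eq_zero (f := F)
        (f' := fun u => ∑ i, c i * ((x i - x 0) * Real.exp ((x i - x 0) * u)))
        (ht (Fin.castSucc_lt_succ (i := j)))
        (fun u _ => (hd u).continuousAt.continuousWithinAt)
        (by rw [hF0, hF0]) (fun u _ => hd u)
      exact ⟨u, hu, hu'⟩
    choose u hu hu0 using hR
    have hum : StrictMono u := by
      intro i j hij
      have h1 : t i.succ ≤ t j.castSucc := ht.monotone (by
        rw [Fin.le_def]; simp; exact hij)
      linarith [(hu i).2, (hu j).1]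
    have key := ih (fun i => c i.succ * (x i.succ - x 0)) (fun i => x i.succ - x 0) u
      (fun i j hij => by
        have := hx (Fin.succ_lt_succ_iff.2 hij)
        simpa using this) hum
      (by
        intro j
        have := hu0 j
        rw [Fin.sum_univ_succ] at this
        simpa [mul_assoc] using this)
    have hs : ∀ i : Fin n, c i.succ = 0 := by
      intro i
      have h1 := hx (Fin.succ_pos i)
      rcases mul_eq_zero.1 (key i) with h | h
      · exact h
      · linarith
    intro i
    refine Fin.cases ?_ hs i
    have := h 0
    rw [Fin.sum_univ_succ] at this
    simpa [hs, Real.exp_ne_zero] using this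

/-- exponential Vandermonde -/
noncomputable def EV {k : ℕ} (x s : Fin k → ℝ) : ℝ :=
  (Matrix.of fun i j => Real.exp (s i * x j)).det

lemma EV_perm {k : ℕ} (x s : Fin k → ℝ) (σ : Equiv.Perm (Fin k)) :
    EV x (s ∘ σ) = (Equiv.Perm.sign σ : ℤ) * EV x s := by
  rw [EV, EV, ← Matrix.det_permute]; rfl

lemma EV_ne_zero_mono {k : ℕ} (x s : Fin k → ℝ) (hx : StrictMono x) (hs : StrictMono s) :
    EV x s ≠ 0 := by
  intro h
  obtain ⟨v, hv, hv'⟩ := Matrix.exists_mulVec_eq_zero_iff.2 h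
  apply hv
  funext i
  refine expsum_zero k v x s hx hs (fun j => ?_) i
  have := congrFun hv' j
  simp only [Matrix.mulVec, dotProduct, Matrix.of_apply, Pi.zero_apply] at this
  rw [← this]
  exact Finset.sum_congr rfl fun i _ => by rw [mul_comm, mul_comm (x i)]

lemma EV_ne_zero {k : ℕ} (x s : Fin k → ℝ) (hx : StrictMono x) (hs : Function.Injective s) :
    EV x s ≠ 0 := by
  have h1 : StrictMono (s ∘ Tuple.sort s) :=
    (Tuple.monotone_sort s).strictMono_of_injective (hs.comp (Tuple.sort s).injective)
  have h2 := EV_ne_zero_mono x _ hx h1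
  rw [EV_perm] at h2
  exact right_ne_zero_of_mul h2

lemma EV_cont {k : ℕ} : Continuous (fun z : (Fin k → ℝ) × (Fin k → ℝ) => EV z.1 z.2) := by
  unfold EV
  refine Continuous.matrix_det ?_
  refine continuous_matrix fun i j => ?_
  simp only [Matrix.of_apply]
  fun_prop

lemma EV_mul_pos {k : ℕ} (x y s : Fin k → ℝ) (hx : StrictMono x) (hy : StrictMono y)
    (hs : Function.Injective s) : 0 < EV x s * EV y s := by
  by_contra hneg
  set P : ℝ → (Fin k → ℝ) := fun θ i => (1 - θ) * x i + θ * y i with hP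
  have hPm : ∀ θ ∈ Set.Icc (0:ℝ) 1, StrictMono (P θ) := by
    intro θ hθ i j hij
    have h1 := hx hij
    have h2 := hy hij
    simp only [hP]
    rcases eq_or_lt_of_le hθ.1 with h | h
    · subst h; linarith
    · nlinarith [hθ.2]
  have hc : Continuous (fun θ => EV (P θ) s) :=
    EV_cont.comp (Continuous.prodMk (by fun_prop) continuous_const)
  have h0 : EV (P 0) s = EV x s := by congr 1; funext i; simp [hP]
  have h1 : EV (P 1) s = EV y s := by congr 1; funext i; simp [hP]
  have hz : ∃ θ ∈ Set.Icc (0:ℝ) 1, EV (P θ) s = 0 := by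
    have hm : (0:ℝ) ∈ Set.uIcc (EV (P 0) s) (EV (P 1) s) := by
      rw [h0, h1, Set.mem_uIcc]
      by_contra hh
      push Not at hh
      apply hneg
      rcases lt_trichotomy (EV x s) 0 with h | h | h
      · exact mul_pos_of_neg_of_neg h (hh.1 h.le)
      · exact absurd h (EV_ne_zero x s hx hs)
      · refine mul_pos h ?_
        by_contra h'
        exact absurd (hh.2 (not_lt.1 h')) (by linarith)
    have := intermediate_value_uIcc (a := (0:ℝ)) (b := 1) hc.continuousOn hm
    obtain ⟨θ, hθ, hθ'⟩ := this
    rw [Set.uIcc_of_le zero_le_one] at hθ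
    exact ⟨θ, hθ, hθ'⟩
  obtain ⟨θ, hθ, hθ'⟩ := hz
  exact EV_ne_zero _ s (hPm θ hθ) hs hθ'

lemma EV_mul_nonneg {k : ℕ} (x y s : Fin k → ℝ) (hx : StrictMono x) (hy : StrictMono y) :
    0 ≤ EV x s * EV y s := by
  by_cases hs : Function.Injective s
  · exact (EV_mul_pos x y s hx hy hs).le
  · have : EV x s = 0 := by
      unfold Function.Injective at hs
      push Not at hs
      obtain ⟨i, j, hij, hne⟩ := hs
      unfold EV
      exact Matrix.det_zero_of_row_eq hne (by funext l; simp [hij])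
    simp [this]

/-- discrete Andreief identity -/
lemma andreief {k : ℕ} {α : Type} [Fintype α] (w s : α → ℝ) (x y : Fin k → ℝ) :
    (k.factorial : ℝ) * (Matrix.of fun i j => ∑ a, w a * Real.exp (s a * (x i + y j))).det =
      ∑ a : Fin k → α, (∏ i, w (a i)) * (EV x (s ∘ a) * EV y (s ∘ a)) := by
  classical
  have h1 : (Matrix.of fun i j => ∑ a, w a * Real.exp (s a * (x i + y j))).det
      = ∑ a : Fin k → α, (∏ i, w (a i) * Real.exp (s (a i) * x i)) * EV y (s ∘ a) := by
    have e : (Matrix.of fun i j => ∑ a, w a * Real.exp (s a * (x i + y j))) =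
        fun i => ∑ a, (w a * Real.exp (s a * x i)) • (fun j => Real.exp (s a * y j)) := by
      funext i j
      simp only [Matrix.of_apply, Finset.sum_apply, Pi.smul_apply, smul_eq_mul]
      refine Finset.sum_congr rfl fun a _ => ?_
      rw [mul_add, Real.exp_add]; ring
    rw [e]
    change (Matrix.detRowAlternating (R := ℝ) (n := Fin k)).toMultilinearMap _ = _
    rw [MultilinearMap.map_sum]
    refine Finset.sum_congr rfl fun a _ => ?_
    rw [MultilinearMap.map_smul_univ, smul_eq_mul]
    rfl
  have h2 : ∀ σ : Equiv.Perm (Fin k),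
      (Matrix.of fun i j => ∑ a, w a * Real.exp (s a * (x i + y j))).det
      = ∑ a : Fin k → α, (∏ i, w (a i)) *
        (((Equiv.Perm.sign σ : ℤ) * ∏ i, Real.exp (s (a (σ i)) * x i)) * EV y (s ∘ a)) := by
    intro σ
    rw [h1, ← (Equiv.arrowCongr σ.symm (Equiv.refl α)).symm.sum_comp
      (fun a => (∏ i, w (a i)) *
        (((Equiv.Perm.sign σ : ℤ) * ∏ i, Real.exp (s (a (σ i)) * x i)) * EV y (s ∘ a)))]
    refine Finset.sum_congr rfl fun a _ => ?_
    have e1 : ((Equiv.arrowCongr σ.symm (Equiv.refl α)).symm a) = a ∘ σ.symm := by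
      funext i; simp [Equiv.arrowCongr]
    rw [e1, ← Function.comp_assoc, EV_perm]
    have e2 : ∏ i, w ((a ∘ σ.symm) i) = ∏ i, w (a i) :=
      σ.symm.prod_comp (fun i => w (a i))
    rw [e2, Finset.prod_mul_distrib]
    simp only [Function.comp_apply, Equiv.symm_apply_apply, Equiv.Perm.sign_symm]
    have e3 : (((Equiv.Perm.sign σ : ℤ) : ℝ)) * ((Equiv.Perm.sign σ : ℤ) : ℝ) = 1 := by
      rw [← Int.cast_mul, ← Units.val_mul, Int.units_mul_self]; simp
    linear_combination (-(∏ i, w (a i)) * (∏ i, Real.exp (s (a i) * x i)) * EV y (s ∘ a)) * e3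
  have h3 : ∑ σ : Equiv.Perm (Fin k),
      (Matrix.of fun i j => ∑ a, w a * Real.exp (s a * (x i + y j))).det
      = (k.factorial : ℝ) *
        (Matrix.of fun i j => ∑ a, w a * Real.exp (s a * (x i + y j))).det := by
    simp [Finset.card_univ, Fintype.card_perm]
  rw [← h3, Finset.sum_congr rfl (fun σ _ => h2 σ), Finset.sum_comm]
  refine Finset.sum_congr rfl fun a _ => ?_
  rw [← Finset.mul_sum, ← Finset.sum_mul]
  congr 2
  unfold EV
  rw [Matrix.det_apply']
  simp

/-- mass of the discrete measure on a set -/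
noncomputable def mass {α : Type} [Fintype α] (w s : α → ℝ) (J : Set ℝ) : ℝ :=
  ∑ a, J.indicator (fun _ => (1:ℝ)) (s a) * w a

lemma det_lower {k : ℕ} (x y : Fin k → ℝ) (hx : StrictMono x) (hy : StrictMono y)
    (J : Fin k → Set ℝ) (hJc : ∀ j, IsCompact (J j)) (hJn : ∀ j, (J j).Nonempty)
    (hJi : ∀ s : Fin k → ℝ, (∀ j, s j ∈ J j) → Function.Injective s) :
    ∃ m : ℝ, 0 < m ∧ ∀ (α : Type) (_ : Fintype α) (w s : α → ℝ), (∀ a, 0 ≤ w a) →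
      m * ∏ j, mass w s (J j) ≤
        (Matrix.of fun i j => ∑ a, w a * Real.exp (s a * (x i + y j))).det := by
  have hcont : Continuous (fun s : Fin k → ℝ => EV x s * EV y s) :=
    (EV_cont.comp (Continuous.prodMk continuous_const continuous_id)).mul
      (EV_cont.comp (Continuous.prodMk continuous_const continuous_id))
  obtain ⟨s0, hs0, hmin⟩ := (isCompact_univ_pi hJc).exists_isMinOn
    (Set.univ_pi_nonempty_iff.2 hJn) hcont.continuousOn
  have hpos : 0 < EV x s0 * EV y s0 :=
    EV_mul_pos x y s0 hx hy (hJi s0 fun j => hs0 j (Set.mem_univ _))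
  have hfac : (0:ℝ) < k.factorial := by exact_mod_cast k.factorial_pos
  refine ⟨(EV x s0 * EV y s0) / k.factorial, div_pos hpos hfac, ?_⟩
  intro α _ w s hw
  classical
  rw [div_mul_eq_mul_div, div_le_iff₀ hfac, mul_comm _ (k.factorial : ℝ), andreief]
  unfold mass
  rw [Finset.prod_univ_sum, Fintype.piFinset_univ, Finset.mul_sum]
  refine Finset.sum_le_sum fun a _ => ?_
  rw [Finset.prod_mul_distrib]
  have hwp : 0 ≤ ∏ i, w (a i) := Finset.prod_nonneg fun i _ => hw _
  by_cases h : ∀ j, s (a j) ∈ J j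
  · have e : ∏ j, (J j).indicator (fun _ => (1:ℝ)) (s (a j)) = 1 :=
      Finset.prod_eq_one fun j _ => by simp [h j]
    rw [e, one_mul, mul_comm]
    refine mul_le_mul_of_nonneg_left ?_ hwp
    exact hmin (a := s ∘ a) (fun j _ => h j)
  · push Not at h
    obtain ⟨j, hj⟩ := h
    have e : ∏ j, (J j).indicator (fun _ => (1:ℝ)) (s (a j)) = 0 :=
      Finset.prod_eq_zero (Finset.mem_univ j) (by simp [hj])
    rw [e]
    have := EV_mul_nonneg x y (s ∘ a) hx hy
    simpa using mul_nonneg hwp this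

section cone
set_option linter.unusedSectionVars false
variable {ι : Type} [Fintype ι]

/-- `φ` is a finite nonnegative combination of exponentials with mass at least `c` on `J` -/
def ERep (p : ι → ℝ) (J : Set ℝ) (c : ℝ) (φ : ι → ℝ) : Prop :=
  ∃ (α : Type) (_ : Fintype α) (w s : α → ℝ), (∀ a, 0 ≤ w a) ∧
    (∀ i, φ i = ∑ a, w a * Real.exp (s a * p i)) ∧ c ≤ mass w s J

lemma mass_nonneg {α : Type} [Fintype α] (w s : α → ℝ) (J : Set ℝ) (hw : ∀ a, 0 ≤ w a) :
    0 ≤ mass w s J :=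
  Finset.sum_nonneg fun a _ => mul_nonneg (Set.indicator_nonneg (fun _ _ => zero_le_one) _) (hw a)

lemma ERep.mono {p : ι → ℝ} {J J' : Set ℝ} {c c' : ℝ} {φ : ι → ℝ} (h : ERep p J c φ)
    (hc : c' ≤ 0) : ERep p J' c' φ := by
  obtain ⟨α, _, w, s, hw, h, _⟩ := h
  exact ⟨α, _, w, s, hw, h, hc.trans (mass_nonneg w s J' hw)⟩

lemma ERep.mul {p : ι → ℝ} {J J' K : Set ℝ} {c d : ℝ} {φ ψ : ι → ℝ} (hφ : ERep p J c φ)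
    (hψ : ERep p J' d ψ) (hd : 0 ≤ d)
    (hK : ∀ a ∈ J, ∀ b ∈ J', a + b ∈ K) : ERep p K (c * d) (φ * ψ) := by
  obtain ⟨α, _, w, s, hw, h, hm⟩ := hφ
  obtain ⟨β, _, w', s', hw', h', hm'⟩ := hψ
  refine ⟨α × β, inferInstance, fun a => w a.1 * w' a.2, fun a => s a.1 + s' a.2,
    fun a => mul_nonneg (hw _) (hw' _), fun i => ?_, ?_⟩
  · rw [Pi.mul_apply, h, h', Finset.sum_mul_sum, ← Finset.univ_product_univ, Finset.sum_product]
    refine Finset.sum_congr rfl fun a _ => Finset.sum_congr rfl fun b _ => ?_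
    rw [add_mul, Real.exp_add]; ring
  · have h1 : c * d ≤ mass w s J * mass w' s' J' :=
      mul_le_mul hm hm' hd (mass_nonneg w s J hw)
    refine h1.trans ?_
    unfold mass
    rw [Finset.sum_mul_sum, ← Finset.univ_product_univ, Finset.sum_product]
    refine Finset.sum_le_sum fun a _ => Finset.sum_le_sum fun b _ => ?_
    have hn : 0 ≤ w a * w' b := mul_nonneg (hw _) (hw' _)
    have hi : J.indicator (fun _ => (1:ℝ)) (s a) * J'.indicator (fun _ => (1:ℝ)) (s' b) ≤
        K.indicator (fun _ => (1:ℝ)) (s a + s' b) := by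
      by_cases h1 : s a ∈ J
      · by_cases h2 : s' b ∈ J'
        · simp [h1, h2, hK _ h1 _ h2]
        · simp only [h2, not_false_eq_true, Set.indicator_of_notMem, mul_zero]
          exact Set.indicator_nonneg (fun _ _ => zero_le_one) _
      · simp only [h1, not_false_eq_true, Set.indicator_of_notMem, zero_mul]
        exact Set.indicator_nonneg (fun _ _ => zero_le_one) _
    calc _ = (J.indicator (fun _ => (1:ℝ)) (s a) * J'.indicator (fun _ => (1:ℝ)) (s' b)) *
          (w a * w' b) := by ring
      _ ≤ _ := mul_le_mul_of_nonneg_right hi hn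

lemma ERep.add {p : ι → ℝ} {J : Set ℝ} {c d : ℝ} {φ ψ : ι → ℝ} (hφ : ERep p J c φ)
    (hψ : ERep p J d ψ) : ERep p J (c + d) (φ + ψ) := by
  obtain ⟨α, _, w, s, hw, h, hm⟩ := hφ
  obtain ⟨β, _, w', s', hw', h', hm'⟩ := hψ
  refine ⟨α ⊕ β, inferInstance, Sum.elim w w', Sum.elim s s', ?_, fun i => ?_, ?_⟩
  · rintro (a | a)
    · exact hw a
    · exact hw' a
  · simp [h, h']
  · have : mass (Sum.elim w w') (Sum.elim s s') J = mass w s J + mass w' s' J := by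
      simp [mass]
    rw [this]; exact add_le_add hm hm'

lemma ERep.exp {p : ι → ℝ} {J : Set ℝ} (c t : ℝ) (hc : 0 ≤ c) (ht : t ∈ J) :
    ERep p J c (fun i => c * Real.exp (t * p i)) :=
  ⟨Unit, inferInstance, fun _ => c, fun _ => t, fun _ => hc, fun i => by simp, by simp [mass, ht]⟩

lemma ERep.smul {p : ι → ℝ} {J : Set ℝ} {c : ℝ} {φ : ι → ℝ} (hφ : ERep p J c φ) (b : ℝ)
    (hb : 0 ≤ b) : ERep p J (b * c) (b • φ) := by
  obtain ⟨α, _, w, s, hw, h, hm⟩ := hφ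
  refine ⟨α, inferInstance, fun a => b * w a, s, fun a => mul_nonneg hb (hw _), fun i => ?_, ?_⟩
  · simp [h, Finset.mul_sum, mul_assoc]
  · have : mass (fun a => b * w a) s J = b * mass w s J := by
      simp only [mass, Finset.mul_sum]
      exact Finset.sum_congr rfl fun a _ => by ring
    rw [this]; exact mul_le_mul_of_nonneg_left hm hb

lemma ERep.pow {p : ι → ℝ} {a b d : ℝ} {φ : ι → ℝ} (hφ : ERep p (Set.Icc a b) d φ) (hd : 0 ≤ d)
    (n : ℕ) : ERep p (Set.Icc (n * a) (n * b)) (d ^ n) (φ ^ n) := by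
  induction n with
  | zero =>
    have := ERep.exp (p := p) (J := Set.Icc (((0:ℕ):ℝ) * a) (((0:ℕ):ℝ) * b)) 1 0 zero_le_one (by simp)
    have e : φ ^ 0 = fun i => 1 * Real.exp (0 * p i) := by funext i; simp
    rw [e, pow_zero]; exact this
  | succ n ih =>
    rw [pow_succ, pow_succ]
    refine ih.mul hφ hd ?_
    rintro u hu v hv
    push_cast
    exact ⟨by linarith [hu.1, hv.1], by linarith [hu.2, hv.2]⟩

lemma rep_convex (p : ι → ℝ) (J : Set ℝ) (c : ℝ) : Convex ℝ {φ | ERep p J c φ} := by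
  intro φ hφ ψ hψ a b ha hb hab
  have := (hφ.smul a ha).add (hψ.smul b hb)
  rwa [← add_mul, hab, one_mul] at this

/-- the semiring of finite nonnegative combinations of exponentials -/
def SR (p : ι → ℝ) : Subsemiring (ι → ℝ) where
  carrier := {φ | ERep p Set.univ 0 φ}
  mul_mem' := by
    intro φ ψ h h'
    have := ERep.mul (K := Set.univ) h h' le_rfl (by simp)
    simpa using this
  add_mem' := by
    intro φ ψ h h'
    have := ERep.add h h'
    simpa using this
  one_mem' := by
    have := (ERep.exp (p := p) (J := Set.univ) 1 0 zero_le_one (by simp)).mono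
      (J' := Set.univ) (c' := 0) le_rfl
    have e : (1 : ι → ℝ) = fun i => 1 * Real.exp (0 * p i) := by funext i; simp
    rw [e]; exact this
  zero_mem' := by
    have := (ERep.exp (p := p) (J := Set.univ) 0 0 le_rfl (by simp))
    have e : (0 : ι → ℝ) = fun i => 0 * Real.exp (0 * p i) := by funext i; simp
    rw [e]; exact this

/-- the closed semiring -/
def CS (p : ι → ℝ) : Subsemiring (ι → ℝ) := (SR p).topologicalClosure

lemma CS_closed (p : ι → ℝ) : IsClosed (CS p : Set (ι → ℝ)) :=
  (SR p).isClosed_topologicalClosure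

lemma CS_exp (p : ι → ℝ) (c t : ℝ) (hc : 0 ≤ c) : (fun i => c * Real.exp (t * p i)) ∈ CS p :=
  (SR p).le_topologicalClosure ((ERep.exp (J := Set.univ) c t hc (by simp)).mono le_rfl)

lemma CS_smul {p : ι → ℝ} {φ : ι → ℝ} (h : φ ∈ CS p) (c : ℝ) (hc : 0 ≤ c) :
    c • φ ∈ CS p := by
  have := (CS p).mul_mem (CS_exp p c 0 hc) h
  convert this using 1
  funext i; simp

lemma CS_convex (p : ι → ℝ) : Convex ℝ (CS p : Set (ι → ℝ)) :=
  fun _ hφ _ hψ _ _ ha hb _ => (CS p).add_mem (CS_smul hφ _ ha) (CS_smul hψ _ hb)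

lemma CS_lim {p : ι → ℝ} {β : Type*} {l : Filter β} [l.NeBot] (u : β → ι → ℝ) (φ : ι → ℝ)
    (hu : ∀ᶠ b in l, u b ∈ CS p) (h : ∀ i, Filter.Tendsto (fun b => u b i) l (nhds (φ i))) :
    φ ∈ CS p :=
  (CS_closed p).mem_of_tendsto (tendsto_pi_nhds.2 h) hu

lemma exp_tendsto (z : ℝ) :
    Filter.Tendsto (fun M : ℕ => ∑ n ∈ Finset.range M, (n.factorial : ℝ)⁻¹ * z ^ n) Filter.atTop
      (nhds (Real.exp z)) := by
  have := (NormedSpace.expSeries_div_hasSum_exp (𝔸 := ℝ) z).tendsto_sum_nat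
  rw [← Real.exp_eq_exp_ℝ] at this
  refine this.congr fun M => Finset.sum_congr rfl fun n _ => ?_
  rw [div_eq_inv_mul]

lemma CS_expo {p : ι → ℝ} {φ : ι → ℝ} (h : φ ∈ CS p) : (fun i => Real.exp (φ i)) ∈ CS p := by
  refine CS_lim (l := Filter.atTop)
    (fun M : ℕ => ∑ n ∈ Finset.range M, (n.factorial : ℝ)⁻¹ • φ ^ n) _
    (Filter.Eventually.of_forall fun M => ?_) fun i => ?_
  · exact (CS p).sum_mem fun n _ => CS_smul ((CS p).pow_mem h n) _ (by positivity)
  · simpa using exp_tendsto (φ i)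

lemma convex_integral {C : Set (ι → ℝ)} (hC : Convex ℝ C) (hcl : IsClosed C) {a b : ℝ}
    (hab : a < b) (φ : ℝ → ι → ℝ) (hφ : ∀ i, ContinuousOn (fun t => φ t i) (Set.Icc a b))
    (hm : ∀ t ∈ Set.Icc a b, φ t ∈ C) :
    (b - a)⁻¹ • (fun i => ∫ t in a..b, φ t i) ∈ C := by
  have hint : MeasureTheory.IntegrableOn φ (Set.Icc a b) MeasureTheory.volume :=
    (continuousOn_pi.2 hφ).integrableOn_Icc
  have := hC.set_average_mem hcl (μ := MeasureTheory.volume) (t := Set.Icc a b) (f := φ)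
    (by simp [hab]) (by simp)
    ((MeasureTheory.ae_restrict_iff' measurableSet_Icc).2 (Filter.Eventually.of_forall hm)) hint
  rw [MeasureTheory.setAverage_eq] at this
  convert this using 2
  · simp [MeasureTheory.measureReal_def, hab.le]
  · funext i
    rw [MeasureTheory.eval_integral (fun i => (hφ i).integrableOn_Icc),
      intervalIntegral.integral_of_le hab.le, MeasureTheory.integral_Icc_eq_integral_Ioc]

lemma CS_integral {p : ι → ℝ} {a b : ℝ}
    (hab : a ≤ b) (φ : ℝ → ι → ℝ) (hφ : ∀ i, ContinuousOn (fun t => φ t i) (Set.Icc a b))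
    (hm : ∀ t ∈ Set.Icc a b, φ t ∈ CS p) :
    (fun i => ∫ t in a..b, φ t i) ∈ CS p := by
  rcases eq_or_lt_of_le hab with h | h
  · subst h; simp only [intervalIntegral.integral_same]; exact (CS p).zero_mem
  · have := CS_smul (convex_integral (CS_convex p) (CS_closed p) h φ hφ hm) (b - a) (by linarith)
    rwa [smul_smul, mul_inv_cancel₀ (by linarith), one_smul] at this

/-- tightness -/
lemma tight {p : ι → ℝ} (L : ι → ℝ) (hL : L ∈ CS p) (i0 i1 i2 : ι) (h0 : 0 < p i1)
    (h01 : p i0 < p i1) (h12 : p i1 < p i2) (hLp : 0 < L i1) :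
    ∃ A B c : ℝ, A ≤ B ∧ 0 < c ∧ L ∈ closure {φ | ERep p (Set.Icc A B) c φ} := by
  have hex : ∀ D q : ℝ, 0 < q → ∃ B : ℝ, 0 ≤ B ∧ Real.exp (-B * q) * D ≤ L i1 / 8 := by
    intro D q hq
    have ht : Filter.Tendsto (fun B : ℝ => Real.exp (-(B * q)) * D) Filter.atTop (nhds (0 * D)) := by
      refine Filter.Tendsto.mul_const D ?_
      exact Real.tendsto_exp_neg_atTop_nhds_zero.comp (Filter.tendsto_id.atTop_mul_const hq)
    rw [zero_mul] at ht
    obtain ⟨B, hB, hB'⟩ := ((ht.eventually_le_const (u := L i1 / 8) (by linarith)).and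
      (Filter.eventually_ge_atTop (0:ℝ))).exists
    exact ⟨B, hB', by simpa using hB⟩
  obtain ⟨B, hB0, hB⟩ := hex (L i2 + 1) (p i2 - p i1) (by linarith)
  obtain ⟨A, hA0, hA⟩ := hex (L i0 + 1) (p i1 - p i0) (by linarith)
  refine ⟨-A, B, L i1 / 4 * Real.exp (-(B * p i1)), by linarith, by positivity, ?_⟩
  set U : Set (ι → ℝ) := {φ | L i1 / 2 < φ i1 ∧ φ i2 < L i2 + 1 ∧ φ i0 < L i0 + 1} with hU
  have hUo : IsOpen U := by
    refine IsOpen.and ?_ (IsOpen.and ?_ ?_)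
    · exact isOpen_lt continuous_const (continuous_apply _)
    · exact isOpen_lt (continuous_apply _) continuous_const
    · exact isOpen_lt (continuous_apply _) continuous_const
  have hLU : L ∈ U := ⟨by linarith, by linarith, by linarith⟩
  have hcl : L ∈ closure (U ∩ (SR p : Set (ι → ℝ))) :=
    hUo.inter_closure ⟨hLU, hL⟩
  refine closure_mono ?_ hcl
  rintro φ ⟨⟨hφ1, hφ2, hφ0⟩, α, _, w, s, hw, h, -⟩
  refine ⟨α, _, w, s, hw, h, ?_⟩
  have key : φ i1 ≤ Real.exp (-B * (p i2 - p i1)) * φ i2 + Real.exp (-A * (p i1 - p i0)) * φ i0 +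
      Real.exp (B * p i1) * mass w s (Set.Icc (-A) B) := by
    rw [h, h, h, mass, Finset.mul_sum, Finset.mul_sum, Finset.mul_sum, ← Finset.sum_add_distrib,
      ← Finset.sum_add_distrib]
    refine Finset.sum_le_sum fun a _ => ?_
    have e1 : Real.exp (s a * p i1) ≤ Real.exp (-B * (p i2 - p i1)) * Real.exp (s a * p i2) +
        Real.exp (-A * (p i1 - p i0)) * Real.exp (s a * p i0) +
        Real.exp (B * p i1) * (Set.Icc (-A) B).indicator (fun _ => (1:ℝ)) (s a) := by
      have q1 := Real.exp_pos (-B * (p i2 - p i1) + s a * p i2)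
      have q2 := Real.exp_pos (-A * (p i1 - p i0) + s a * p i0)
      rw [← Real.exp_add, ← Real.exp_add]
      by_cases hs : s a ∈ Set.Icc (-A) B
      · have : Real.exp (s a * p i1) ≤ Real.exp (B * p i1) :=
          Real.exp_le_exp.2 (mul_le_mul_of_nonneg_right hs.2 h0.le)
        simp only [hs, Set.indicator_of_mem, mul_one]
        linarith
      · simp only [hs, not_false_eq_true, Set.indicator_of_notMem, mul_zero, add_zero]
        rw [Set.mem_Icc, not_and_or, not_le, not_le] at hs
        rcases hs with hs | hs
        · have : Real.exp (s a * p i1) ≤ Real.exp (-A * (p i1 - p i0) + s a * p i0) :=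
            Real.exp_le_exp.2 (by nlinarith)
          linarith
        · have : Real.exp (s a * p i1) ≤ Real.exp (-B * (p i2 - p i1) + s a * p i2) :=
            Real.exp_le_exp.2 (by nlinarith)
          linarith
    calc _ ≤ w a * _ := mul_le_mul_of_nonneg_left e1 (hw a)
      _ = _ := by ring
  have k1 : Real.exp (-B * (p i2 - p i1)) * φ i2 ≤ L i1 / 8 :=
    (mul_le_mul_of_nonneg_left hφ2.le (Real.exp_pos _).le).trans hB
  have k2 : Real.exp (-A * (p i1 - p i0)) * φ i0 ≤ L i1 / 8 :=
    (mul_le_mul_of_nonneg_left hφ0.le (Real.exp_pos _).le).trans hA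
  have k3 : L i1 / 4 ≤ Real.exp (B * p i1) * mass w s (Set.Icc (-A) B) := by linarith
  rw [Real.exp_neg, ← div_eq_mul_inv, div_le_iff₀ (Real.exp_pos _)]
  linarith

lemma ERep_family {p : ι → ℝ} {M : ℕ} (φ : Fin M → ι → ℝ) (J : Fin M → Set ℝ) (c : Fin M → ℝ)
    (h : ∀ n, ERep p (J n) (c n) (φ n)) :
    ∃ (α : Type) (_ : Fintype α) (w s : α → ℝ), (∀ a, 0 ≤ w a) ∧
    (∀ i, ∑ n, φ n i = ∑ a, w a * Real.exp (s a * p i)) ∧ ∀ n, c n ≤ mass w s (J n) := by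
  choose α hα w s hw hs hm using h
  refine ⟨Σ n, α n, inferInstance, fun a => w a.1 a.2, fun a => s a.1 a.2, fun a => hw _ _,
    fun i => ?_, fun n => ?_⟩
  · rw [Fintype.sum_sigma]
    exact Finset.sum_congr rfl fun n _ => hs n i
  · refine (hm n).trans ?_
    unfold mass
    rw [Fintype.sum_sigma]
    exact Finset.single_le_sum (f := fun n' => ∑ a, (J n).indicator (fun _ => (1:ℝ)) (s n' a) * w n' a)
      (fun n' _ => mass_nonneg (w n') (s n') (J n) (hw n')) (Finset.mem_univ n)

lemma key_lower {p : ι → ℝ} {k : ℕ} (x y : Fin k → ℝ) (hx : StrictMono x) (hy : StrictMono y)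
    (e : Fin k → Fin k → ι) (he : ∀ i j, p (e i j) = x i + y j) (A B c d r : ℝ) (hAB : A ≤ B)
    (hc : 0 < c) (hd : 0 < d) (hr : 0 < r) :
    ∃ δ : ℝ, 0 < δ ∧ ∀ l η : ι → ℝ, ERep p (Set.Icc A B) c l →
      ERep p (Set.Icc (-((k:ℝ) + 1)) (-(k:ℝ))) d η →
      δ ≤ (Matrix.of fun i j => l (e i j) * Real.exp (r * η (e i j))).det := by
  obtain ⟨N, hN⟩ := exists_nat_gt (B - A)
  have hN0 : (0:ℝ) < N := lt_of_le_of_lt (by linarith) hN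
  set I : ℕ → Set ℝ := fun n =>
    Set.Icc (A + n * (-((k:ℝ) + 1))) (B + n * (-(k:ℝ))) with hI
  obtain ⟨m, hm, hm'⟩ := det_lower x y hx hy (fun j => I (j * N))
    (fun j => isCompact_Icc) (fun j => by
      refine Set.nonempty_Icc.2 ?_
      have : (0:ℝ) ≤ ((j * N : ℕ) : ℝ) := Nat.cast_nonneg _
      nlinarith)
    (by
      intro s hs
      have : StrictAnti s := by
        intro i j hij
        have h1 := (hs i).1
        have h2 := (hs j).2
        push_cast at h1 h2
        have hij' : (i:ℝ) + 1 ≤ (j:ℝ) := by exact_mod_cast hij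
        have hik : (i:ℝ) + 1 ≤ k := by exact_mod_cast i.2
        have h3 : ((i:ℝ) + 1) * N * k ≤ (j:ℝ) * N * k := by gcongr
        have h4 : ((i:ℝ) + 1) * N ≤ k * N := by gcongr
        nlinarith
      exact this.injective)
  set C : ℕ → ℝ := fun n => c * ((n.factorial : ℝ)⁻¹ * (r * d) ^ n) with hC
  have hCpos : ∀ n, 0 < C n := fun n => by simp only [hC]; positivity
  refine ⟨m * ∏ j : Fin k, C (j * N), mul_pos hm (Finset.prod_pos fun j _ => hCpos _), ?_⟩
  intro l η hl hη
  have hlim : Filter.Tendsto (fun M : ℕ => (Matrix.of fun i j => l (e i j) *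
      ∑ n ∈ Finset.range M, (n.factorial : ℝ)⁻¹ * (r * η (e i j)) ^ n).det) Filter.atTop
      (nhds (Matrix.of fun i j => l (e i j) * Real.exp (r * η (e i j))).det) := by
    have hcd : Continuous (fun Q : Matrix (Fin k) (Fin k) ℝ => Q.det) := continuous_id.matrix_det
    refine (hcd.tendsto _).comp ?_
    refine tendsto_pi_nhds.2 fun i => tendsto_pi_nhds.2 fun j => ?_
    exact (exp_tendsto _).const_mul _
  refine ge_of_tendsto hlim ?_
  filter_upwards [Filter.eventually_gt_atTop (k * N)] with M hM
  have hrep : ∀ n : Fin M, ERep p (I n) (C n) (l * ((n.1.factorial : ℝ)⁻¹ • (r • η) ^ n.1)) := by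
    intro n
    have h1 := ((hη.smul r hr.le).pow (mul_pos hr hd).le n.1).smul (n.1.factorial : ℝ)⁻¹
      (by positivity)
    refine hl.mul h1 (by positivity) ?_
    intro u hu v hv
    exact ⟨add_le_add hu.1 hv.1, add_le_add hu.2 hv.2⟩
  obtain ⟨α, _, w, s, hw, hs, hmass⟩ := ERep_family _ _ _ hrep
  have hdet := hm' α inferInstance w s hw
  have e1 : (Matrix.of fun i j => l (e i j) *
      ∑ n ∈ Finset.range M, (n.factorial : ℝ)⁻¹ * (r * η (e i j)) ^ n) =
      (Matrix.of fun i j => ∑ a, w a * Real.exp (s a * (x i + y j))) := by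
    ext i j
    simp only [Matrix.of_apply]
    rw [← he, ← hs, Finset.mul_sum, ← Fin.sum_univ_eq_sum_range
      (fun n => l (e i j) * ((n.factorial : ℝ)⁻¹ * (r * η (e i j)) ^ n))]
    rfl
  rw [e1]
  refine le_trans (mul_le_mul_of_nonneg_left ?_ hm.le) hdet
  refine Finset.prod_le_prod (fun j _ => (hCpos _).le) fun j _ => ?_
  have hj : (j:ℕ) * N < M :=
    lt_of_le_of_lt (Nat.mul_le_mul_right N j.2.le) hM
  exact hmass ⟨j * N, hj⟩

/-- the building block -/
noncomputable def hh (p : ι → ℝ) (K : ℝ) : ι → ℝ :=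
  fun i => ∫ t in (-(K + 1))..(-K), Real.exp (t * p i)

lemma hh_eq (p : ι → ℝ) (hp : ∀ i, 0 < p i) (K : ℝ) (i : ι) :
    hh p K i = (Real.exp (-K * p i) - Real.exp (-(K + 1) * p i)) / p i := by
  unfold hh
  rw [intervalIntegral.integral_comp_mul_right (fun t => Real.exp t) (hp i).ne', integral_exp,
    smul_eq_mul, div_eq_inv_mul]

lemma hh_mem (p : ι → ℝ) (K : ℝ) :
    hh p K ∈ closure {φ | ERep p (Set.Icc (-(K + 1)) (-K)) 1 φ} := by
  have := convex_integral (rep_convex p (Set.Icc (-(K + 1)) (-K)) 1).closure isClosed_closure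
    (a := -(K + 1)) (b := -K) (by linarith) (fun t i => Real.exp (t * p i))
    (fun i => by fun_prop) (fun t ht => subset_closure (by
      have := ERep.exp (p := p) 1 t zero_le_one ht
      simpa using this))
  have e : (-K - -(K + 1))⁻¹ = (1:ℝ) := by ring_nf
  rw [e, one_smul] at this
  exact this

lemma int_exp (c a b : ℝ) (hc : c ≠ 0) :
    ∫ t in a..b, Real.exp (-(c * t)) = (Real.exp (-(c * a)) - Real.exp (-(c * b))) / c := by
  have h : ∀ t, HasDerivAt (fun t => - Real.exp (-(c * t)) / c) (Real.exp (-(c * t))) t := by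
    intro t
    have h1 := (((hasDerivAt_id t).const_mul c).neg).exp.neg.div_const c
    refine HasDerivAt.congr_deriv h1 ?_
    simp only [id, mul_one]; field_simp; rfl
  rw [intervalIntegral.integral_eq_sub_of_hasDerivAt (fun t _ => h t)
    (Continuous.intervalIntegrable (by fun_prop) _ _)]
  ring

lemma CS_inv (p : ι → ℝ) (hp : ∀ i, 0 < p i) (u : ℝ) (hu : 0 ≤ u) :
    (fun i => (p i + u)⁻¹) ∈ CS p := by
  refine CS_lim (l := Filter.atTop) (fun R : ℝ => fun i => ∫ t in (0:ℝ)..R, Real.exp (-((p i + u) * t)))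
    _ ?_ fun i => ?_
  · filter_upwards [Filter.eventually_ge_atTop 0] with R hR
    refine CS_integral hR (fun t i => Real.exp (-((p i + u) * t))) (fun i => by fun_prop) ?_
    intro t _
    have := CS_exp p (Real.exp (-(u * t))) (-t) (Real.exp_pos _).le
    convert this using 2 with i
    rw [← Real.exp_add]; ring_nf
  · have hpos : 0 < p i + u := by linarith [hp i]
    simp only [int_exp _ _ _ hpos.ne']
    have h1 : Filter.Tendsto (fun R : ℝ => Real.exp (-((p i + u) * R))) Filter.atTop (nhds 0) :=
      Real.tendsto_exp_neg_atTop_nhds_zero.comp (Filter.tendsto_id.const_mul_atTop hpos)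
    have h2 := (h1.const_sub (Real.exp (-((p i + u) * 0)))).div_const (p i + u)
    simpa using h2

lemma CS_inv_sub (p : ι → ℝ) (hp : ∀ i, 0 < p i) (K : ℝ) (hK : 0 ≤ K) (u : ℝ) (hu : 0 ≤ u)
    (hu1 : u ≤ 1) :
    (fun i => (p i + u)⁻¹ - Real.exp (-(K + 1)) * hh p K i) ∈ CS p := by
  have h1 : (fun i => ∫ t in (0:ℝ)..K, Real.exp (-((p i + u) * t))) ∈ CS p := by
    refine CS_integral hK (fun t i => Real.exp (-((p i + u) * t))) (fun i => by fun_prop) ?_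
    intro t _
    have := CS_exp p (Real.exp (-(u * t))) (-t) (Real.exp_pos _).le
    convert this using 2 with i
    rw [← Real.exp_add]; ring_nf
  have h2 : (fun i => ∫ t in K..(K+1), (Real.exp (-((p i + u) * t)) -
      Real.exp (-(K + 1)) * Real.exp (-(p i * t)))) ∈ CS p := by
    refine CS_integral (by linarith) (fun t i => (Real.exp (-((p i + u) * t)) -
      Real.exp (-(K + 1)) * Real.exp (-(p i * t)))) (fun i => by fun_prop) ?_
    intro t ht
    have := CS_exp p (Real.exp (-(u * t)) - Real.exp (-(K + 1))) (-t) (by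
      rw [sub_nonneg]
      refine Real.exp_le_exp.2 ?_
      nlinarith [ht.1, ht.2])
    convert this using 2 with i
    rw [sub_mul, ← Real.exp_add, ← Real.exp_add, ← Real.exp_add]; ring_nf
  have h3 := (CS p).mul_mem
    (CS_exp p (Real.exp (-(u * (K + 1)))) (-(K + 1)) (Real.exp_pos _).le) (CS_inv p hp u hu)
  have h4 := (CS p).add_mem ((CS p).add_mem h1 h2) h3
  convert h4 using 1
  funext i
  have hpos : 0 < p i + u := by linarith [hp i]
  simp only [Pi.add_apply, Pi.mul_apply]
  rw [intervalIntegral.integral_sub (Continuous.intervalIntegrable (by fun_prop) _ _)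
    (Continuous.intervalIntegrable (by fun_prop) _ _), intervalIntegral.integral_const_mul,
    int_exp _ _ _ hpos.ne', int_exp _ _ _ hpos.ne', int_exp _ _ _ (hp i).ne', hh_eq p hp,
    ← Real.exp_add]
  have e1 : -(u * (K + 1)) + -(K + 1) * p i = -((p i + u) * (K + 1)) := by ring
  have e2 : -K * p i = -(p i * K) := by ring
  have e3 : -(K + 1) * p i = -(p i * (K + 1)) := by ring
  rw [e1, e2, e3, mul_zero, neg_zero, Real.exp_zero]
  field_simp
  ring

lemma int_frac (x a b : ℝ) (hx : 0 < x) (ha : 0 ≤ a) (hab : a ≤ b) :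
    ∫ u in a..b, u * (x + u)⁻¹ = (b - x * Real.log (x + b)) - (a - x * Real.log (x + a)) := by
  have hd : ∀ u ∈ Set.uIcc a b, HasDerivAt (fun u => u - x * Real.log (x + u)) (u * (x + u)⁻¹) u := by
    intro u hu
    rw [Set.uIcc_of_le hab] at hu
    have hpos : 0 < x + u := by linarith [hu.1]
    have h1 := (hasDerivAt_id u).sub (((((hasDerivAt_id u).const_add x)).log hpos.ne').const_mul x)
    refine HasDerivAt.congr_deriv h1 ?_
    simp only [id]; field_simp; ring
  rw [intervalIntegral.integral_eq_sub_of_hasDerivAt hd]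
  refine ContinuousOn.intervalIntegrable ?_
  rw [Set.uIcc_of_le hab]
  refine continuousOn_id.mul (ContinuousOn.inv₀ (by fun_prop) ?_)
  intro u hu
  have : 0 < x + u := by linarith [hu.1]
  exact this.ne'

lemma CS_L (p : ι → ℝ) (hp : ∀ i, 0 < p i) (K : ℝ) (hK : 0 ≤ K) (r : ℝ) (hr : 0 < r) :
    (fun i => Real.exp (r * (p i * Real.log (p i) - Real.exp (-(K + 1)) / 2 * hh p K i))) ∈ CS p := by
  have hco : ∀ i, ∀ a b : ℝ, 0 ≤ a → ContinuousOn (fun u => u * (p i + u)⁻¹) (Set.Icc a b) := by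
    intro i a b ha
    refine continuousOn_id.mul (ContinuousOn.inv₀ (by fun_prop) ?_)
    intro u hu
    have : 0 < p i + u := by linarith [hu.1, hp i]
    exact this.ne'
  have h1 : (fun i => ∫ u in (0:ℝ)..1, (u * (p i + u)⁻¹ - u * (Real.exp (-(K + 1)) * hh p K i)))
      ∈ CS p := by
    refine CS_integral zero_le_one
      (fun u i => u * (p i + u)⁻¹ - u * (Real.exp (-(K + 1)) * hh p K i))
      (fun i => (hco i 0 1 le_rfl).sub (by fun_prop)) ?_
    intro u hu
    have := CS_smul (CS_inv_sub p hp K hK u hu.1 hu.2) u hu.1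
    convert this using 1
    funext i
    simp [mul_sub]
  refine CS_lim (l := Filter.atTop) (fun T : ℝ => fun i => Real.exp (r * (p i * Real.log (p i) -
    Real.exp (-(K + 1)) / 2 * hh p K i + p i * (Real.log T - Real.log (p i + T))))) _ ?_ fun i => ?_
  · filter_upwards [Filter.eventually_ge_atTop 1] with T hT
    have h2 : (fun i => ∫ u in (1:ℝ)..T, u * (p i + u)⁻¹) ∈ CS p := by
      refine CS_integral hT (fun u i => u * (p i + u)⁻¹) (fun i => hco i 1 T zero_le_one) ?_
      intro u hu
      have h0 : 0 ≤ u := by linarith [hu.1]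
      exact CS_smul (CS_inv p hp u h0) u h0
    have h3 := (CS p).mul_mem (CS_exp p (Real.exp (-(r * T))) (r * Real.log T) (Real.exp_pos _).le)
      (CS_expo (CS_smul ((CS p).add_mem h1 h2) r hr.le))
    convert h3 using 1
    funext i
    simp only [Pi.mul_apply, Pi.smul_apply, Pi.add_apply, smul_eq_mul]
    rw [← Real.exp_add, ← Real.exp_add]
    congr 1
    have hi : ∀ a b : ℝ, 0 ≤ a → a ≤ b → IntervalIntegrable (fun u => u * (p i + u)⁻¹)
        MeasureTheory.volume a b := by
      intro a b ha hab
      refine ContinuousOn.intervalIntegrable ?_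
      rw [Set.uIcc_of_le hab]; exact hco i a b ha
    rw [intervalIntegral.integral_sub (hi 0 1 le_rfl zero_le_one)
      (Continuous.intervalIntegrable (by fun_prop) _ _), intervalIntegral.integral_mul_const,
      int_frac _ _ _ (hp i) le_rfl zero_le_one, int_frac _ _ _ (hp i) zero_le_one hT, integral_id]
    rw [add_zero]
    ring
  · have hlog : Filter.Tendsto (fun T : ℝ => Real.log T - Real.log (p i + T)) Filter.atTop (nhds 0) := by
      have h1 : Filter.Tendsto (fun T : ℝ => -Real.log (p i / T + 1)) Filter.atTop
          (nhds (-Real.log (0 + 1))) := by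
        refine Filter.Tendsto.neg (Filter.Tendsto.log ?_ (by norm_num))
        exact (Filter.Tendsto.const_div_atTop Filter.tendsto_id _).add_const 1
      simp only [zero_add, Real.log_one, neg_zero] at h1
      refine h1.congr' ?_
      filter_upwards [Filter.eventually_gt_atTop 0] with T hT
      have hpi := hp i
      rw [← neg_sub, ← Real.log_div (by positivity) hT.ne', add_div, div_self hT.ne']
    have h2 := (((hlog.const_mul (p i)).const_add (p i * Real.log (p i) -
      Real.exp (-(K + 1)) / 2 * hh p K i)).const_mul r).rexp
    simpa using h2

lemma main_pos (p : ι → ℝ) (hp : ∀ i, 0 < p i) {k : ℕ} (x y : Fin k → ℝ) (hx : StrictMono x)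
    (hy : StrictMono y) (e : Fin k → Fin k → ι) (he : ∀ i j, p (e i j) = x i + y j)
    (i0 i1 i2 : ι) (h01 : p i0 < p i1) (h12 : p i1 < p i2) (r : ℝ) (hr : 0 < r) :
    0 < (Matrix.of fun i j => Real.exp (r * (p (e i j) * Real.log (p (e i j))))).det := by
  set E := Real.exp (-((k:ℝ) + 1)) / 2 with hE
  have hE0 : 0 < E := by positivity
  have hL := CS_L p hp k (Nat.cast_nonneg k) r hr
  obtain ⟨A, B, c, hAB, hc, hcl⟩ := tight _ hL i0 i1 i2 (hp i1) h01 h12 (Real.exp_pos _)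
  obtain ⟨δ, hδ, hδ'⟩ := key_lower x y hx hy e he A B c 1 (r * E) hAB hc one_pos (mul_pos hr hE0)
  have hclosed : IsClosed {z : (ι → ℝ) × (ι → ℝ) |
      δ ≤ (Matrix.of fun i j => z.1 (e i j) * Real.exp (r * E * z.2 (e i j))).det} := by
    refine isClosed_le continuous_const (Continuous.matrix_det ?_)
    refine continuous_matrix fun i j => ?_
    simp only [Matrix.of_apply]
    fun_prop
  have hmem := closure_minimal (s := {φ | ERep p (Set.Icc A B) c φ} ×ˢ
    {φ | ERep p (Set.Icc (-((k:ℝ) + 1)) (-(k:ℝ))) 1 φ}) (fun z hz => hδ' z.1 z.2 hz.1 hz.2) hclosed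
  rw [closure_prod_eq] at hmem
  have hfin := hmem (Set.mk_mem_prod hcl (hh_mem p k))
  refine lt_of_lt_of_le hδ (le_trans hfin (le_of_eq ?_))
  congr 1
  ext i j
  simp only [Matrix.of_apply]
  rw [← Real.exp_add]
  congr 1
  ring

end cone

/-- Every positive entrywise power of the matrix `A = [(i+j−1)^(i+j−1)]`
(indices running from 1 to n) is strictly totally positive. -/
theorem stmt_12 (n : ℕ) (r : ℝ) (hr : 0 < r)
    (k : ℕ) (f g : Fin k → Fin n) (hf : StrictMono f) (hg : StrictMono g) :
    0 < ((Matrix.of fun i j : Fin n =>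
        (((i : ℕ) + 1 + ((j : ℕ) + 1) - 1 : ℕ) : ℝ) ^
          ((((i : ℕ) + 1 + ((j : ℕ) + 1) - 1 : ℕ) : ℝ) * r)).submatrix f g).det := by
  have key := main_pos (ι := Fin (2 * n + 3)) (fun i => (i : ℕ) + 1) (fun i => by positivity)
    (fun i => ((f i : ℕ) : ℝ) + 1 / 2) (fun i => ((g i : ℕ) : ℝ) + 1 / 2)
    (fun i j hij => by
      have : (f i : ℕ) < (f j : ℕ) := hf hij
      have h : ((f i : ℕ) : ℝ) < ((f j : ℕ) : ℝ) := by exact_mod_cast this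
      simpa using h)
    (fun i j hij => by
      have : (g i : ℕ) < (g j : ℕ) := hg hij
      have h : ((g i : ℕ) : ℝ) < ((g j : ℕ) : ℝ) := by exact_mod_cast this
      simpa using h)
    (fun i j => ⟨(f i : ℕ) + (g j : ℕ), by have := (f i).2; have := (g j).2; omega⟩)
    (fun i j => by push_cast; ring)
    ⟨0, by omega⟩ ⟨1, by omega⟩ ⟨2, by omega⟩ (by norm_num) (by norm_num) r hr
  refine lt_of_lt_of_eq key ?_
  congr 1
  ext i j
  simp only [Matrix.of_apply, Matrix.submatrix_apply]
  have e1 : (f i : ℕ) + 1 + ((g j : ℕ) + 1) - 1 = (f i : ℕ) + (g j : ℕ) + 1 := by omega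
  rw [e1, Real.rpow_def_of_pos (by positivity)]
  congr 1
  push_cast
  ring
end

section
/- Let A be the n×n matrix with (i,j) entry (i+j−1)^(i+j−1) for 1 ≤ i, j ≤ n. Then A is strictly totally positive: every minor of A is strictly positive. -/
open Matrix

/-- Row differencing. -/
lemma det_diff (l : ℕ) (X : ℕ → ℕ → ℝ) (f : Fin (l + 1) → ℕ) (hX : ∀ i, 0 < X i 0) :
    (Matrix.of fun i j : Fin (l + 1) => X (f i) j).det =
      (∏ i, X (f i) 0) * (Matrix.of fun i j : Fin l =>
        X (f i.succ) (j + 1) / X (f i.succ) 0 - X (f i.castSucc) (j + 1) / X (f i.castSucc) 0).det := by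
  have h1 : (Matrix.of fun i j : Fin (l + 1) => X (f i) j) =
      Matrix.of fun i j : Fin (l + 1) => X (f i) 0 * (X (f i) j / X (f i) 0) := by
    ext i j
    have := (hX (f i)).ne'
    simp only [Matrix.of_apply]
    field_simp
  rw [h1]
  have h2 := Matrix.det_mul_column (fun i : Fin (l + 1) => X (f i) 0)
    (Matrix.of fun i j : Fin (l + 1) => (X (f i) j / X (f i) 0))
  simp only [Matrix.of_apply] at h2
  rw [h2]
  congr 1
  rw [Matrix.det_eq_of_forall_row_eq_smul_add_pred (B := Matrix.of (Fin.cons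
      (fun j : Fin (l + 1) => X (f 0) j / X (f 0) 0)
      (fun (i : Fin l) (j : Fin (l + 1)) => X (f i.succ) j / X (f i.succ) 0
        - X (f i.castSucc) j / X (f i.castSucc) 0))) (fun _ => 1)]
  · rw [Matrix.det_succ_column_zero, Fin.sum_univ_succ]
    have e0 : X (f 0) 0 / X (f 0) 0 = 1 := div_self (hX _).ne'
    have e1 : ∀ i : Fin l, X (f i.succ) 0 / X (f i.succ) 0
        - X (f i.castSucc) 0 / X (f i.castSucc) 0 = 0 := by
      intro i
      rw [div_self (hX _).ne', div_self (hX _).ne', sub_self]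
    simp [e0, e1]
    congr 1
  · intro j
    simp
  · intro i j
    simp

lemma fekete (l : ℕ) : ∀ X : ℕ → ℕ → ℝ,
    (∀ m ≤ l, ∀ r, 0 < (Matrix.of fun i j : Fin m => X (r + i) j).det) →
    ∀ f : Fin l → ℕ, StrictMono f → 0 < (Matrix.of fun i j : Fin l => X (f i) j).det := by
  induction l with
  | zero => intro X _ f _; simp
  | succ l ih =>
    intro X hX f hf
    have h0 : ∀ i, 0 < X i 0 := by
      intro i
      have := hX 1 (by omega) i
      simpa using this
    rw [det_diff l X f h0]
    refine mul_pos (Finset.prod_pos fun i _ => h0 _) ?_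
    set Y : ℕ → ℕ → ℝ := fun t j => X (t + 1) (j + 1) / X (t + 1) 0 - X t (j + 1) / X t 0 with hY
    have hYpos : ∀ g : Fin l → ℕ, StrictMono g →
        0 < (Matrix.of fun i j : Fin l => Y (g i) j).det := by
      apply ih
      intro m hm r
      have := hX (m + 1) (by omega) r
      rw [det_diff m X (fun i => r + i) h0] at this
      have := pos_of_mul_pos_right this (Finset.prod_nonneg fun i _ => (h0 _).le)
      simpa [hY, add_assoc] using this
    have hsum : (Matrix.of fun i j : Fin l =>
        X (f i.succ) (j + 1) / X (f i.succ) 0 - X (f i.castSucc) (j + 1) / X (f i.castSucc) 0) =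
        fun i => ∑ t ∈ Finset.Ico (f i.castSucc) (f i.succ), fun j : Fin l => Y t j := by
      ext i j
      have hle : f i.castSucc ≤ f i.succ := (hf i.castSucc_lt_succ).le
      rw [Finset.sum_apply, Finset.sum_Ico_eq_sub _ hle]
      have := fun n => Finset.sum_range_sub (fun t => X t (j + 1) / X t 0) n
      simp only [hY, this, Matrix.of_apply]
      ring
    rw [hsum]
    have := (Matrix.detRowAlternating (R := ℝ) (n := Fin l)).toMultilinearMap.map_sum_finset
      (fun i t => (fun j : Fin l => Y t j))
      (fun i : Fin l => Finset.Ico (f i.castSucc) (f i.succ))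
    change 0 < Matrix.detRowAlternating.toMultilinearMap _
    rw [this]
    refine Finset.sum_pos ?_ ?_
    · intro g hg
      rw [Fintype.mem_piFinset] at hg
      refine hYpos g ?_
      intro a b hab
      have ha := Finset.mem_Ico.1 (hg a)
      have hb := Finset.mem_Ico.1 (hg b)
      have : f a.succ ≤ f b.castSucc := hf.monotone (by
        rw [Fin.le_def]; simp; exact hab)
      omega
    · rw [Fintype.piFinset_nonempty]
      intro i
      exact Finset.nonempty_Ico.2 (hf i.castSucc_lt_succ)

lemma hankel_tp (a : ℕ → ℝ)
    (ha : ∀ k r, 0 < (Matrix.of fun i j : Fin k => a (r + i + j)).det)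
    (k : ℕ) (f g : Fin k → ℕ) (hf : StrictMono f) (hg : StrictMono g) :
    0 < (Matrix.of fun i j : Fin k => a (f i + g j)).det := by
  have s1 : ∀ m (g : Fin m → ℕ), StrictMono g → ∀ r,
      0 < (Matrix.of fun i j : Fin m => a (r + i + g j)).det := by
    intro m g hg r
    have := fekete m (fun i j => a (r + i + j)) (fun m _ r' => by
      simpa [add_assoc] using ha m (r + r')) g hg
    rw [← Matrix.det_transpose]
    convert this using 3
    ext i j
    simp only [Matrix.transpose_apply, Matrix.of_apply]
    congr 1; ring
  have := fekete k (fun i j => a (i + if h : j < k then g ⟨j, h⟩ else 0)) (by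
    intro m hm r
    have := s1 m (fun j => g (Fin.castLE hm j)) (fun x y h => hg (by simpa using h)) r
    convert this using 5 with i j
    have : (j : ℕ) < k := by omega
    simp [this]
    rfl) f hf
  simpa using this

lemma cauchy_pos_s13 (n : ℕ) (c : Fin n → ℝ) (hc : c ≠ 0) (x : ℝ) (hx : 0 < x) :
    0 < ∑ a : Fin n, ∑ b : Fin n, c a * c b * (x + (a : ℕ) + (b : ℕ))⁻¹ := by
  have hpos : ∀ a b : Fin n, 0 < x + (a : ℕ) + (b : ℕ) := fun a b => by positivity
  set P : ℝ → ℝ := fun y => ∑ a : Fin n, ∑ b : Fin n,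
    c a * c b * (x + (a : ℕ) + (b : ℕ))⁻¹ * y ^ (x + (a : ℕ) + (b : ℕ)) with hP
  have hd : ∀ y : ℝ, 0 < y → HasDerivAt P (y ^ (x - 1) * (∑ a : Fin n, c a * y ^ (a : ℕ)) ^ 2) y := by
    intro y hy
    have : HasDerivAt P (∑ a : Fin n, ∑ b : Fin n, c a * c b * (x + (a : ℕ) + (b : ℕ))⁻¹ *
        ((x + (a : ℕ) + (b : ℕ)) * y ^ (x + (a : ℕ) + (b : ℕ) - 1))) y := by
      refine HasDerivAt.fun_sum fun a _ => HasDerivAt.fun_sum fun b _ => ?_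
      exact (Real.hasDerivAt_rpow_const (Or.inl hy.ne')).const_mul _
    convert this using 1
    rw [sq, Finset.sum_mul_sum, Finset.mul_sum]
    refine Finset.sum_congr rfl fun a _ => ?_
    rw [Finset.mul_sum]
    refine Finset.sum_congr rfl fun b _ => ?_
    have e : y ^ (x + (a : ℕ) + (b : ℕ) - 1) = y ^ (x - 1) * y ^ (a : ℕ) * y ^ (b : ℕ) := by
      rw [← Real.rpow_natCast, ← Real.rpow_natCast, ← Real.rpow_add hy, ← Real.rpow_add hy]
      congr 1; ring
    rw [e]
    have := (hpos a b).ne'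
    field_simp
  have hcont : ContinuousOn P (Set.Icc 0 1) := by
    apply Continuous.continuousOn
    refine continuous_finsetSum _ fun a _ => continuous_finsetSum _ fun b _ => ?_
    exact continuous_const.mul (Real.continuous_rpow_const (hpos a b).le)
  have hmono : MonotoneOn P (Set.Icc 0 1) := by
    refine monotoneOn_of_deriv_nonneg (convex_Icc 0 1) hcont ?_ ?_
    · intro y hy
      rw [interior_Icc] at hy
      exact (hd y hy.1).differentiableAt.differentiableWithinAt
    · intro y hy
      rw [interior_Icc] at hy
      rw [(hd y hy.1).deriv]
      have := hy.1
      positivity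
  have h0 : P 0 = 0 := by
    simp only [hP]
    refine Finset.sum_eq_zero fun a _ => Finset.sum_eq_zero fun b _ => ?_
    rw [Real.zero_rpow (hpos a b).ne', mul_zero]
  have h1 : P 1 = ∑ a : Fin n, ∑ b : Fin n, c a * c b * (x + (a : ℕ) + (b : ℕ))⁻¹ := by
    simp [hP]
  rw [← h1]
  have h01 : P 0 ≤ P 1 := hmono (by simp) (by simp) zero_le_one
  rw [h0] at h01
  refine lt_of_le_of_ne h01 fun h => hc ?_
  have hz : ∀ y ∈ Set.Ioo (0 : ℝ) 1, P y = 0 := by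
    intro y hy
    have a1 := hmono (by simp) (Set.Ioo_subset_Icc_self hy) hy.1.le
    have a2 := hmono (Set.Ioo_subset_Icc_self hy) (by simp) hy.2.le
    linarith
  have hz' : ∀ y ∈ Set.Ioo (0 : ℝ) 1, ∑ a : Fin n, c a * y ^ (a : ℕ) = 0 := by
    intro y hy
    have e : P =ᶠ[nhds y] fun _ => (0 : ℝ) := by
      filter_upwards [Ioo_mem_nhds hy.1 hy.2] with z hz1 using hz z hz1
    have := (hd y hy.1).deriv
    rw [e.deriv_eq, deriv_const] at this
    have h2 := (Real.rpow_pos_of_pos hy.1 (x - 1)).ne'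
    have h3 := (mul_eq_zero.1 this.symm).resolve_left h2
    exact pow_eq_zero_iff (two_ne_zero) |>.1 h3
  set p : Polynomial ℝ := ∑ a : Fin n, Polynomial.C (c a) * Polynomial.X ^ (a : ℕ) with hp
  have hp0 : p = 0 := by
    refine Polynomial.eq_zero_of_infinite_isRoot p ((Set.Ioo_infinite (zero_lt_one' ℝ)).mono ?_)
    intro y hy
    simp only [Set.mem_ofPred_eq, Polynomial.IsRoot.def, hp, Polynomial.eval_finsetSum,
      Polynomial.eval_mul, Polynomial.eval_C, Polynomial.eval_pow, Polynomial.eval_X]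
    exact hz' y hy
  ext a
  have := congrArg (fun q => Polynomial.coeff q (a : ℕ)) hp0
  simp only [hp, Polynomial.finsetSum_coeff, Polynomial.coeff_C_mul, Polynomial.coeff_X_pow,
    Polynomial.coeff_zero] at this
  simpa [Fin.val_inj] using this

/-- `x log x` -/
noncomputable def psi (x : ℝ) : ℝ := x * Real.log x

lemma second_diff_pos (n : ℕ) (c : Fin n → ℝ) (hc : c ≠ 0) (x : ℝ) (hx : 0 < x) :
    0 < ∑ a : Fin n, ∑ b : Fin n, c a * c b *
      (psi (x + (a : ℕ) + (b : ℕ) + 2) - 2 * psi (x + (a : ℕ) + (b : ℕ) + 1)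
        + psi (x + (a : ℕ) + (b : ℕ))) := by
  set Q : ℝ → ℝ := fun y => ∑ a : Fin n, ∑ b : Fin n,
    c a * c b * Real.log (y + (a : ℕ) + (b : ℕ)) with hQ
  have hpos : ∀ y : ℝ, 0 < y → ∀ a b : Fin n, 0 < y + (a : ℕ) + (b : ℕ) :=
    fun y hy a b => by positivity
  have dlin : ∀ (y : ℝ) (a b : Fin n), HasDerivAt (fun y : ℝ => y + (a : ℕ) + (b : ℕ)) 1 y :=
    fun y a b => ((hasDerivAt_id y).add_const _).add_const _
  have hQd : ∀ y : ℝ, 0 < y → HasDerivAt Q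
      (∑ a : Fin n, ∑ b : Fin n, c a * c b * (y + (a : ℕ) + (b : ℕ))⁻¹) y := by
    intro y hy
    refine HasDerivAt.fun_sum fun a _ => HasDerivAt.fun_sum fun b _ => ?_
    have := ((dlin y a b).log (hpos y hy a b).ne').const_mul (c a * c b)
    simpa using this
  have hQm : StrictMonoOn Q (Set.Ioi 0) := by
    refine strictMonoOn_of_deriv_pos (convex_Ioi 0)
      (fun y hy => (hQd y hy).continuousAt.continuousWithinAt) ?_
    intro y hy
    rw [interior_Ioi] at hy
    rw [(hQd y hy).deriv]
    exact cauchy_pos_s13 n c hc y hy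
  set D : ℝ → ℝ := fun y => ∑ a : Fin n, ∑ b : Fin n,
    c a * c b * (psi (y + (a : ℕ) + (b : ℕ) + 1) - psi (y + (a : ℕ) + (b : ℕ))) with hD
  have hDd : ∀ y : ℝ, 0 < y → HasDerivAt D (Q (y + 1) - Q y) y := by
    intro y hy
    have : HasDerivAt D (∑ a : Fin n, ∑ b : Fin n, c a * c b *
        ((Real.log (y + (a : ℕ) + (b : ℕ) + 1) + 1) * 1 - (Real.log (y + (a : ℕ) + (b : ℕ)) + 1) * 1)) y := by
      refine HasDerivAt.fun_sum fun a _ => HasDerivAt.fun_sum fun b _ => ?_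
      have hp := hpos y hy a b
      have h1 : (y + (a : ℕ) + (b : ℕ) + 1 : ℝ) ≠ 0 := by positivity
      exact (((Real.hasDerivAt_mul_log h1).comp y ((dlin y a b).add_const 1)).sub
        ((Real.hasDerivAt_mul_log hp.ne').comp y (dlin y a b))).const_mul _
    convert this using 1
    simp only [hQ, ← Finset.sum_sub_distrib]
    refine Finset.sum_congr rfl fun a _ => Finset.sum_congr rfl fun b _ => ?_
    rw [show y + 1 + ((a : ℕ) : ℝ) + ((b : ℕ) : ℝ) = y + (a : ℕ) + (b : ℕ) + 1 by ring]
    ring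
  have hDm : StrictMonoOn D (Set.Ioi 0) := by
    refine strictMonoOn_of_deriv_pos (convex_Ioi 0)
      (fun y hy => (hDd y hy).continuousAt.continuousWithinAt) ?_
    intro y hy
    rw [interior_Ioi] at hy
    rw [(hDd y hy).deriv, sub_pos]
    exact hQm hy (Set.mem_Ioi.2 (by have := Set.mem_Ioi.1 hy; linarith)) (by linarith)
  have := hDm (Set.mem_Ioi.2 hx) (Set.mem_Ioi.2 (by linarith)) (show x < x + 1 by linarith)
  rw [← sub_pos] at this
  refine lt_of_lt_of_eq this ?_
  simp only [hD, ← Finset.sum_sub_distrib]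
  refine Finset.sum_congr rfl fun a _ => Finset.sum_congr rfl fun b _ => ?_
  rw [show x + 1 + ((a : ℕ) : ℝ) + ((b : ℕ) : ℝ) = x + (a : ℕ) + (b : ℕ) + 1 by ring,
    show x + ((a : ℕ) : ℝ) + ((b : ℕ) : ℝ) + 1 + 1 = x + (a : ℕ) + (b : ℕ) + 2 by ring]
  ring

lemma exp_quad (n : ℕ) (B : Matrix (Fin n) (Fin n) ℝ) (hB : B.PosSemidef) (d : Fin n → ℝ) :
    (∑ i, d i) ^ 2 + ∑ i, ∑ j, d i * d j * B i j ≤ ∑ i, ∑ j, d i * d j * Real.exp (B i j) := by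
  have hpow : ∀ k : ℕ, (Matrix.of fun i j => B i j ^ k).PosSemidef := by
    intro k
    induction k with
    | zero =>
      have := Matrix.posSemidef_vecMulVec_self_star (fun _ : Fin n => (1 : ℝ))
      convert this using 1
      ext i j
      simp [Matrix.vecMulVec_apply]
    | succ k ih =>
      have h := ih.hadamard hB
      have e : (Matrix.of fun i j => B i j ^ (k + 1)) = (Matrix.of fun i j => B i j ^ k) ⊙ B := by
        ext i j
        simp [pow_succ]
      rw [e]
      exact h
  have hnn : ∀ k : ℕ, 0 ≤ ∑ i, ∑ j, d i * d j * B i j ^ k := by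
    intro k
    have := (hpow k).dotProduct_mulVec_nonneg d
    refine le_of_le_of_eq this ?_
    simp only [dotProduct, Matrix.mulVec, Finset.mul_sum]
    refine Finset.sum_congr rfl fun a _ => Finset.sum_congr rfl fun b _ => ?_
    simp; ring
  have hs : HasSum (fun k : ℕ => ∑ i, ∑ j, d i * d j * (B i j ^ k / (k.factorial : ℝ)))
      (∑ i, ∑ j, d i * d j * Real.exp (B i j)) := by
    refine hasSum_sum fun i _ => hasSum_sum fun j _ => HasSum.mul_left _ ?_
    rw [Real.exp_eq_exp_ℝ]
    exact NormedSpace.expSeries_div_hasSum_exp _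
  have := sum_le_hasSum (Finset.range 2) (fun k _ => by
    have := div_nonneg (hnn k) (Nat.cast_nonneg (α := ℝ) k.factorial)
    simpa only [Finset.sum_div, mul_div_assoc] using this) hs
  refine le_trans (le_of_eq ?_) this
  rw [Finset.sum_range_succ, Finset.sum_range_one, sq, Finset.sum_mul_sum]
  simp

lemma psi_step (x : ℝ) (i j : ℕ) :
    ∑ a ∈ Finset.range i, ∑ b ∈ Finset.range j,
      (psi (x + a + b + 2) - 2 * psi (x + a + b + 1) + psi (x + a + b)) =
    psi (x + i + j) - psi (x + i) - psi (x + j) + psi x := by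
  have h1 : ∀ a : ℕ, ∑ b ∈ Finset.range j,
      (psi (x + a + b + 2) - 2 * psi (x + a + b + 1) + psi (x + a + b)) =
      (psi (x + (a + 1 : ℕ) + j) - psi (x + (a + 1 : ℕ))) - (psi (x + a + j) - psi (x + a)) := by
    intro a
    have := Finset.sum_range_sub (fun b : ℕ => psi (x + a + b + 1) - psi (x + a + b)) j
    have e : psi (x + (a + 1 : ℕ) + j) - psi (x + (a + 1 : ℕ)) - (psi (x + a + j) - psi (x + a)) =
        psi (x + a + j + 1) - psi (x + a + j) - (psi (x + a + (0 : ℕ) + 1) - psi (x + a + (0 : ℕ))) := by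
      push_cast
      rw [show x + ((a : ℝ) + 1) + j = x + a + j + 1 by ring,
        show x + ((a : ℝ) + 1) = x + a + 0 + 1 by ring, add_zero]
      ring
    rw [e, ← this]
    refine Finset.sum_congr rfl fun b _ => ?_
    push_cast
    rw [show x + a + ((b : ℝ) + 1) + 1 = x + a + b + 2 by ring,
      show x + a + ((b : ℝ) + 1) = x + a + b + 1 by ring]
    ring
  rw [Finset.sum_congr rfl fun a _ => h1 a]
  rw [Finset.sum_range_sub (fun a : ℕ => psi (x + a + j) - psi (x + a)) i]
  simp
  ring

/-- The form with kernel `psi (x+i+j) - psi (x+i) - psi (x+j) + psi x`. -/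
lemma quad_tail (n : ℕ) (x : ℝ) (d : Fin n → ℝ) :
    ∑ i : Fin n, ∑ j : Fin n, d i * d j *
      (psi (x + (i : ℕ) + (j : ℕ)) - psi (x + (i : ℕ)) - psi (x + (j : ℕ)) + psi x) =
    ∑ a : Fin n, ∑ b : Fin n, (∑ i, if a < i then d i else 0) * (∑ j, if b < j then d j else 0) *
      (psi (x + (a : ℕ) + (b : ℕ) + 2) - 2 * psi (x + (a : ℕ) + (b : ℕ) + 1)
        + psi (x + (a : ℕ) + (b : ℕ))) := by
  set h : ℕ → ℕ → ℝ := fun a b =>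
    psi (x + a + b + 2) - 2 * psi (x + a + b + 1) + psi (x + a + b) with hh
  have conv : ∀ (i : Fin n) (F : ℕ → ℝ), ∑ a ∈ Finset.range (i : ℕ), F a =
      ∑ a : Fin n, if a < i then F a else 0 := by
    intro i F
    have h1 := Fin.sum_univ_eq_sum_range (fun a => if a < (i : ℕ) then F a else 0) n
    simp only [Fin.lt_def]
    rw [h1, ← Finset.sum_filter]
    refine Finset.sum_congr ?_ fun _ _ => rfl
    ext a
    have := i.2
    simp only [Finset.mem_range, Finset.mem_filter]
    omega
  have e1 : ∀ i j : Fin n, d i * d j *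
      (psi (x + (i : ℕ) + (j : ℕ)) - psi (x + (i : ℕ)) - psi (x + (j : ℕ)) + psi x) =
      ∑ a : Fin n, ∑ b : Fin n,
        (if a < i then d i else 0) * (if b < j then d j else 0) * h a b := by
    intro i j
    rw [← psi_step x i j, conv i, Finset.mul_sum]
    refine Finset.sum_congr rfl fun a _ => ?_
    rw [conv j (fun b => h a b)]
    by_cases ha : a < i
    · simp only [ha, if_true, Finset.mul_sum]
      refine Finset.sum_congr rfl fun b _ => ?_
      by_cases hb : b < j <;> simp [hb]
    · simp [ha]
  simp only [e1]
  have e2 : ∀ a b : Fin n, (∑ i, if a < i then d i else 0) * (∑ j, if b < j then d j else 0) * h a b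
      = ∑ i, ∑ j, (if a < i then d i else 0) * (if b < j then d j else 0) * h a b := by
    intro a b
    rw [Finset.sum_mul_sum, Finset.sum_mul]
    simp only [Finset.sum_mul]
  change _ = ∑ a : Fin n, ∑ b : Fin n, (∑ i, if a < i then d i else 0) *
    (∑ j, if b < j then d j else 0) * h a b
  simp only [e2]
  rw [Finset.sum_congr rfl fun i _ => Finset.sum_comm]
  rw [Finset.sum_comm]
  refine Finset.sum_congr rfl fun a _ => ?_
  rw [Finset.sum_congr rfl fun i _ => Finset.sum_comm]
  rw [Finset.sum_comm]

lemma tail_zero (n : ℕ) (d : Fin n → ℝ) (hs : ∑ i, d i = 0)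
    (ht : (fun a : Fin n => ∑ i, if a < i then d i else 0) = 0) : d = 0 := by
  have ht' : ∀ a : Fin n, (∑ i, if a < i then d i else 0) = 0 := fun a => congrFun ht a
  have hle : ∀ a : Fin n, (∑ i, if a ≤ i then d i else 0) = 0 := by
    intro a
    by_cases h0 : (a : ℕ) = 0
    · rw [← hs]
      refine Finset.sum_congr rfl fun i _ => ?_
      rw [if_pos]
      rw [Fin.le_def]; omega
    · have := ht' ⟨a - 1, by omega⟩
      rw [← this]
      refine Finset.sum_congr rfl fun i _ => ?_
      simp only [Fin.le_def, Fin.lt_def]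
      congr 1
      apply propext
      constructor <;> intro _ <;> omega
  ext a
  have e : (∑ i, if a ≤ i then d i else 0) - (∑ i, if a < i then d i else 0) = d a := by
    rw [← Finset.sum_sub_distrib, Finset.sum_eq_single a]
    · simp
    · intro b _ hb
      by_cases h : a < b
      · simp [h, h.le]
      · have : ¬ a ≤ b := fun h' => h (lt_of_le_of_ne h' (Ne.symm hb))
        simp [h, this]
    · simp
  rw [hle, ht'] at e
  simpa using e.symm

lemma quad_nonneg (n : ℕ) (x : ℝ) (hx : 0 < x) (d : Fin n → ℝ) :
    0 ≤ ∑ i : Fin n, ∑ j : Fin n, d i * d j *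
      (psi (x + (i : ℕ) + (j : ℕ)) - psi (x + (i : ℕ)) - psi (x + (j : ℕ)) + psi x) := by
  rw [quad_tail]
  by_cases h : (fun a : Fin n => ∑ i, if a < i then d i else 0) = 0
  · have h' : ∀ a : Fin n, (∑ i, if a < i then d i else 0) = 0 := fun a => congrFun h a
    simp [h']
  · exact (second_diff_pos n _ h x hx).le

lemma exp_psi_pos (n : ℕ) (x : ℝ) (hx : 0 < x) (d : Fin n → ℝ) (hd : d ≠ 0) :
    0 < ∑ i : Fin n, ∑ j : Fin n, d i * d j *
      Real.exp (psi (x + (i : ℕ) + (j : ℕ)) - psi (x + (i : ℕ)) - psi (x + (j : ℕ)) + psi x) := by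
  set B : Matrix (Fin n) (Fin n) ℝ := Matrix.of fun i j =>
    psi (x + (i : ℕ) + (j : ℕ)) - psi (x + (i : ℕ)) - psi (x + (j : ℕ)) + psi x with hBdef
  have hB : B.PosSemidef := by
    refine Matrix.PosSemidef.of_dotProduct_mulVec_nonneg ?_ ?_
    · ext i j
      simp only [hBdef, Matrix.conjTranspose_apply, Matrix.of_apply, star_trivial]
      rw [show x + ((j : ℕ) : ℝ) + ((i : ℕ) : ℝ) = x + (i : ℕ) + (j : ℕ) by ring]
      ring
    · intro v
      refine le_of_le_of_eq (quad_nonneg n x hx v) ?_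
      simp only [dotProduct, Matrix.mulVec, Finset.mul_sum]
      refine Finset.sum_congr rfl fun a _ => Finset.sum_congr rfl fun b _ => ?_
      simp [hBdef]; ring
  have h := exp_quad n B hB d
  refine lt_of_lt_of_le ?_ h
  have hnn := quad_nonneg n x hx d
  by_cases h1 : (fun a : Fin n => ∑ i, if a < i then d i else 0) = 0
  · have h2 : ∑ i, d i ≠ 0 := fun hs => hd (tail_zero n d hs h1)
    exact add_pos_of_pos_of_nonneg (by positivity) hnn
  · refine add_pos_of_nonneg_of_pos (by positivity) ?_
    have := second_diff_pos n _ h1 x hx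
    rw [← quad_tail] at this
    exact this

lemma psi_hankel_det (n r : ℕ) :
    0 < (Matrix.of fun i j : Fin n =>
      ((((r + i + j) + 1) ^ ((r + i + j) + 1) : ℕ) : ℝ)).det := by
  have hx : (0 : ℝ) < r + 1 := by positivity
  apply Matrix.PosDef.det_pos
  refine Matrix.PosDef.of_dotProduct_mulVec_pos ?_ ?_
  · ext i j
    simp only [Matrix.conjTranspose_apply, Matrix.of_apply, star_trivial]
    rw [show r + (j : ℕ) + (i : ℕ) = r + i + j by ring]
  · intro v hv
    set x : ℝ := r + 1 with hxdef
    have hE : ∀ i j : Fin n, ((((r + i + j) + 1) ^ ((r + i + j) + 1) : ℕ) : ℝ) =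
        Real.exp (psi (x + (i : ℕ) + (j : ℕ))) := by
      intro i j
      have e : x + (i : ℕ) + (j : ℕ) = ((r + i + j + 1 : ℕ) : ℝ) := by
        push_cast [hxdef]; ring
      rw [e, psi, mul_comm, ← Real.rpow_def_of_pos (by positivity), Real.rpow_natCast]
      push_cast; rfl
    have hd : (fun i : Fin n => v i * Real.exp (psi (x + (i : ℕ)))) ≠ 0 := by
      intro h
      apply hv
      ext i
      have := congrFun h i
      simpa [Real.exp_ne_zero] using this
    have := mul_pos (exp_psi_pos n x hx _ hd) (Real.exp_pos (- psi x))
    refine lt_of_lt_of_eq this ?_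
    simp only [dotProduct, Matrix.mulVec, Finset.mul_sum, Finset.sum_mul]
    refine Finset.sum_congr rfl fun i _ => Finset.sum_congr rfl fun j _ => ?_
    rw [Matrix.of_apply, hE]
    have e : Real.exp (psi (x + (i : ℕ) + (j : ℕ))) = Real.exp (psi (x + (i : ℕ))) *
        Real.exp (psi (x + (j : ℕ))) *
        Real.exp (psi (x + (i : ℕ) + (j : ℕ)) - psi (x + (i : ℕ)) - psi (x + (j : ℕ)) + psi x) *
        Real.exp (- psi x) := by
      rw [← Real.exp_add, ← Real.exp_add, ← Real.exp_add]
      congr 1; ring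
    rw [e]
    simp only [Pi.star_apply, star_trivial]
    ring

/-- The matrix `A = [(i+j−1)^(i+j−1)]` (indices running from 1 to n) is strictly
totally positive: every minor is strictly positive. -/
theorem stmt_13 (n : ℕ)
    (k : ℕ) (f g : Fin k → Fin n) (hf : StrictMono f) (hg : StrictMono g) :
    0 < ((Matrix.of fun i j : Fin n =>
        ((((i : ℕ) + 1 + ((j : ℕ) + 1) - 1) ^ ((i : ℕ) + 1 + ((j : ℕ) + 1) - 1) : ℕ) :
          ℝ)).submatrix f g).det := by
  have h := hankel_tp (fun m => (((m + 1) ^ (m + 1) : ℕ) : ℝ))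
    (fun k r => psi_hankel_det k r) k (fun i => (f i : ℕ)) (fun i => (g i : ℕ))
    (fun a b hab => hf hab) (fun a b hab => hg hab)
  refine lt_of_lt_of_eq h ?_
  congr 1
  ext i j
  simp only [Matrix.of_apply, Matrix.submatrix_apply]
  rw [show (f i : ℕ) + 1 + ((g j : ℕ) + 1) - 1 = f i + g j + 1 by omega]
end
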